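/- arXiv:2410.02969 — 2 statements merged into one kernel-verified Lean document; each statement's English description precedes it below -/
import Mathlib

section
/- Existence of a weak solution: assume s·pᵢ(x,y) < N for all i and all (x,y) ∈ Q̄, and let r : Ω̄ → ℝ be continuous with 1 < r(x) < P⁻₋ for all x ∈ Ω̄. Then there exists λ* > 0 such that for every λ ∈ (0, λ*) there exists w ∈ X₀, not a.e. equal to 0, satisfying for every φ ∈ X₀: Σ_{i=1}^N ∫∫_Q |w(x)−w(y)|^{pᵢ(x,y)−2}(w(x)−w(y))(φ(x)−φ(y))/|x−y|^{s·pᵢ(x,y)+N} dx dy + ∫_Ω |w(x)|^{p_M(x)−2} w(x) φ(x) dx = λ·∫_Ω |w(x)|^{r(x)−2} w(x) φ(x) dx; i.e. w is a weak solution of the anisotropic nonlocal problem (−Δ)^s_{p⃗(x,·)} u + |u|^{p_M(x)−2}u = λ|u|^{r(x)−2}u in Ω, u = 0 on ℝ^N ∖ Ω. -/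
/-!
Since `r ≤ R < p i` with `R := max r > 1`, the energy functional is coercive and the solution is a
global minimiser of it. The term with `r` is absorbed into half of the term with `pM`
(`exists_absorb`), so that after adding a constant all integrands are nonnegative and the energy
makes sense in `[0, ∞]` for every measurable function.

The minimiser is obtained without a compact embedding. Passing from `w` to `|w|` does not raise the
energy, and in the variable `g = |w| ^ R` the energy is midpoint quasi-convex
(`Setting.energy_midpoint`): by Minkowski's inequality in the plane,
`|g x ^ (1 / R) - g y ^ (1 / R)| ^ p` is midpoint convex for `p ≥ R` (`hidden_convex`),
`g ^ (pM / R)` is convex, and `- g ^ (r / R)` is convex. Selecting among almost minimisers those that also almost minimise the strictly convex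
functional `∫ exp (-g)` produces a minimising sequence for which `exp (-g / 2)` is Cauchy in `L²`,
hence one that converges almost everywhere along a subsequence (`exists_minimizing_seq`). Coercivity
and Fatou's lemma exclude the limit `∞` and show that the limit is a minimiser
(`Setting.exists_minimizer`).

Differentiating under the integral sign along `w + t φ` gives the weak equation
(`Setting.hasDerivAt_Jfun`, `Setting.Jderiv_eq_zero`). The minimiser is not zero: a small
multiple of a Lipschitz bump has smaller energy than zero, since `R < P` where `P` is the infimum
of the exponents `p i` (`Setting.exists_energy_lt`).
-/

open MeasureTheory ENNReal Filter Topology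

noncomputable section

abbrev Euc (N : ℕ) := EuclideanSpace ℝ (Fin N)

/-- Luxemburg norm on the variable exponent Lebesgue space `L^{q(x)}(Ω)`. -/
def luxNorm {N : ℕ} (Ω : Set (Euc N)) (q : Euc N → ℝ) (w : Euc N → ℝ) : ℝ :=
  sInf {ν : ℝ | 0 < ν ∧ (∫⁻ x in Ω, ENNReal.ofReal (|w x / ν| ^ q x)) ≤ 1}

/-- Modular of the variable exponent Lebesgue space. -/
def luxModular {N : ℕ} (Ω : Set (Euc N)) (q : Euc N → ℝ) (w : Euc N → ℝ) : ℝ≥0∞ :=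
  ∫⁻ x in Ω, ENNReal.ofReal (|w x| ^ q x)

/-- Variable exponent Gagliardo seminorm over a set `S` of pairs. -/
def gagSemi {N : ℕ} (S : Set (Euc N × Euc N)) (s : ℝ) (p : Euc N × Euc N → ℝ)
    (w : Euc N → ℝ) : ℝ :=
  sInf {ν : ℝ | 0 < ν ∧ (∫⁻ z in S, ENNReal.ofReal
      (|w z.1 - w z.2| ^ p z / (ν ^ p z * ‖z.1 - z.2‖ ^ (s * p z + N)))) ≤ 1}

/-- Gagliardo modular over a set `S` of pairs. -/
def gagModular {N : ℕ} (S : Set (Euc N × Euc N)) (s : ℝ) (p : Euc N × Euc N → ℝ)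
    (w : Euc N → ℝ) : ℝ≥0∞ :=
  ∫⁻ z in S, ENNReal.ofReal (|w z.1 - w z.2| ^ p z / ‖z.1 - z.2‖ ^ (s * p z + N))

/-- Anisotropic Gagliardo seminorm: sum over directions. -/
def WSeminorm {N : ℕ} (S : Set (Euc N × Euc N)) (s : ℝ)
    (p : Fin N → Euc N × Euc N → ℝ) (w : Euc N → ℝ) : ℝ :=
  ∑ i, gagSemi S s (p i) w

/-- Anisotropic modular: sum over directions. -/
def WModular {N : ℕ} (S : Set (Euc N × Euc N)) (s : ℝ)
    (p : Fin N → Euc N × Euc N → ℝ) (w : Euc N → ℝ) : ℝ≥0∞ :=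
  ∑ i, gagModular S s (p i) w

/-- Norm of the anisotropic fractional Sobolev space with variable exponent. -/
def WNorm {N : ℕ} (Ω : Set (Euc N)) (S : Set (Euc N × Euc N)) (s : ℝ)
    (p : Fin N → Euc N × Euc N → ℝ) (pM : Euc N → ℝ) (w : Euc N → ℝ) : ℝ :=
  WSeminorm S s p w + luxNorm Ω pM w

/-- Membership in the anisotropic fractional Sobolev space with variable exponent. -/
def memW {N : ℕ} (Ω : Set (Euc N)) (S : Set (Euc N × Euc N)) (s : ℝ)
    (p : Fin N → Euc N × Euc N → ℝ) (pM : Euc N → ℝ) (w : Euc N → ℝ) : Prop :=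
  Measurable w ∧ (∫⁻ x in Ω, ENNReal.ofReal (|w x| ^ pM x)) < ⊤ ∧
    ∀ i, ∃ ν > (0:ℝ), (∫⁻ z in S, ENNReal.ofReal
      (|w z.1 - w z.2| ^ p i z / (ν ^ p i z * ‖z.1 - z.2‖ ^ (s * p i z + N)))) < ⊤

/-- Membership in `X₀`: member of `X` vanishing a.e. outside `Ω`. -/
def memX0 {N : ℕ} (Ω : Set (Euc N)) (Q : Set (Euc N × Euc N)) (s : ℝ)
    (p : Fin N → Euc N × Euc N → ℝ) (pM : Euc N → ℝ) (w : Euc N → ℝ) : Prop :=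
  memW Ω Q s p pM w ∧ ∀ᵐ x : Euc N, x ∉ Ω → w x = 0

/-- The energy functional `J_λ` associated to the anisotropic nonlocal problem. -/
def Jfun {N : ℕ} (Ω : Set (Euc N)) (Q : Set (Euc N × Euc N)) (s : ℝ)
    (p : Fin N → Euc N × Euc N → ℝ) (pM r : Euc N → ℝ) (lam : ℝ)
    (w : Euc N → ℝ) : ℝ :=
  (∑ i, ∫ z in Q, |w z.1 - w z.2| ^ p i z / ‖z.1 - z.2‖ ^ (s * p i z + N) / p i z) +
    (∫ x in Ω, |w x| ^ pM x / pM x) - lam * ∫ x in Ω, |w x| ^ r x / r x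

/-- The Gateaux derivative pairing `⟨J'_λ(w), φ⟩`. -/
def Jderiv {N : ℕ} (Ω : Set (Euc N)) (Q : Set (Euc N × Euc N)) (s : ℝ)
    (p : Fin N → Euc N × Euc N → ℝ) (pM r : Euc N → ℝ) (lam : ℝ)
    (w φ : Euc N → ℝ) : ℝ :=
  (∑ i, ∫ z in Q, |w z.1 - w z.2| ^ (p i z - 2) * (w z.1 - w z.2) *
      (φ z.1 - φ z.2) / ‖z.1 - z.2‖ ^ (s * p i z + N)) +
    (∫ x in Ω, |w x| ^ (pM x - 2) * w x * φ x) -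
    lam * ∫ x in Ω, |w x| ^ (r x - 2) * w x * φ x

/-! ### Elementary inequalities and hidden convexity -/

lemma rpow_midpoint_le {q a b : ℝ} (hq : 1 ≤ q) (ha : 0 ≤ a) (hb : 0 ≤ b) :
    ((a + b) / 2) ^ q ≤ (a ^ q + b ^ q) / 2 := by
  have h := (convexOn_rpow hq).2 (Set.mem_Ici.2 ha) (Set.mem_Ici.2 hb)
    (by norm_num : (0:ℝ) ≤ 1 / 2) (by norm_num : (0:ℝ) ≤ 1 / 2) (by norm_num)
  simp only [smul_eq_mul] at h
  have e : (a + b) / 2 = 1 / 2 * a + 1 / 2 * b := by ring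
  rw [e]; linarith

lemma le_rpow_midpoint {q a b : ℝ} (hq0 : 0 ≤ q) (hq : q ≤ 1) (ha : 0 ≤ a) (hb : 0 ≤ b) :
    (a ^ q + b ^ q) / 2 ≤ ((a + b) / 2) ^ q := by
  have h := (Real.concaveOn_rpow hq0 hq).2 (Set.mem_Ici.2 ha) (Set.mem_Ici.2 hb)
    (by norm_num : (0:ℝ) ≤ 1 / 2) (by norm_num : (0:ℝ) ≤ 1 / 2) (by norm_num)
  simp only [smul_eq_mul] at h
  have e : (a + b) / 2 = 1 / 2 * a + 1 / 2 * b := by ring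
  rw [e]; linarith

/-- Minkowski's inequality in the plane with the `ℓ^ρ` norm, as a reverse triangle inequality. -/
lemma abs_lp_sub_le {ρ α β γ δ : ℝ} (hρ : 1 ≤ ρ) (hα : 0 ≤ α) (hβ : 0 ≤ β) (hγ : 0 ≤ γ)
    (hδ : 0 ≤ δ) :
    |(α ^ ρ + γ ^ ρ) ^ (1 / ρ) - (β ^ ρ + δ ^ ρ) ^ (1 / ρ)| ≤
      (|α - β| ^ ρ + |γ - δ| ^ ρ) ^ (1 / ρ) := by
  have key : ∀ α β γ δ : ℝ, 0 ≤ α → 0 ≤ β → 0 ≤ γ → 0 ≤ δ →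
      (α ^ ρ + γ ^ ρ) ^ (1 / ρ) ≤
        (|α - β| ^ ρ + |γ - δ| ^ ρ) ^ (1 / ρ) + (β ^ ρ + δ ^ ρ) ^ (1 / ρ) := by
    intro α β γ δ hα hβ hγ hδ
    have h := Real.Lp_add_le Finset.univ ![α - β, γ - δ] ![β, δ] hρ
    simpa [Fin.sum_univ_two, abs_of_nonneg, hα, hβ, hγ, hδ] using h
  have h1 := key α β γ δ hα hβ hγ hδ
  have h2 := key β α δ γ hβ hα hδ hγ
  rw [abs_sub_comm β α, abs_sub_comm δ γ] at h2
  rw [abs_le]; constructor <;> linarith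

/-- Hidden convexity of the Gagliardo integrand: it is midpoint convex as a function of the
`ρ`-th powers of the values, for every `1 ≤ ρ ≤ p`. -/
lemma hidden_convex {ρ p a b c d : ℝ} (hρ : 1 ≤ ρ) (hp : ρ ≤ p) (ha : 0 ≤ a) (hb : 0 ≤ b)
    (hc : 0 ≤ c) (hd : 0 ≤ d) :
    |((a + c) / 2) ^ (1 / ρ) - ((b + d) / 2) ^ (1 / ρ)| ^ p ≤
      (|a ^ (1 / ρ) - b ^ (1 / ρ)| ^ p + |c ^ (1 / ρ) - d ^ (1 / ρ)| ^ p) / 2 := by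
  have hρ0 : 0 < ρ := by linarith
  have pw : ∀ t : ℝ, 0 ≤ t → (t ^ (1 / ρ)) ^ ρ = t := fun t ht => by
    rw [← Real.rpow_mul ht, one_div, inv_mul_cancel₀ hρ0.ne', Real.rpow_one]
  have h := abs_lp_sub_le hρ (Real.rpow_nonneg ha (1 / ρ)) (Real.rpow_nonneg hb (1 / ρ))
    (Real.rpow_nonneg hc (1 / ρ)) (Real.rpow_nonneg hd (1 / ρ))
  rw [pw a ha, pw b hb, pw c hc, pw d hd] at h
  set X := |a ^ (1 / ρ) - b ^ (1 / ρ)| with hX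
  set Y := |c ^ (1 / ρ) - d ^ (1 / ρ)| with hY
  have hX0 : 0 ≤ X := abs_nonneg _
  have hY0 : 0 ≤ Y := abs_nonneg _
  have h2 : 0 < (2:ℝ) ^ (1 / ρ) := Real.rpow_pos_of_pos (by norm_num) _
  have e1 : |((a + c) / 2) ^ (1 / ρ) - ((b + d) / 2) ^ (1 / ρ)| ≤
      ((X ^ ρ + Y ^ ρ) / 2) ^ (1 / ρ) := by
    rw [Real.div_rpow (by positivity) (by norm_num), Real.div_rpow (by positivity) (by norm_num),
      Real.div_rpow (by positivity) (by norm_num), ← sub_div, abs_div, abs_of_pos h2]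
    gcongr
  calc _ ≤ (((X ^ ρ + Y ^ ρ) / 2) ^ (1 / ρ)) ^ p :=
        Real.rpow_le_rpow (abs_nonneg _) e1 (by linarith)
    _ = ((X ^ ρ + Y ^ ρ) / 2) ^ (p / ρ) := by
        rw [← Real.rpow_mul (by positivity)]; congr 1; ring
    _ ≤ ((X ^ ρ) ^ (p / ρ) + (Y ^ ρ) ^ (p / ρ)) / 2 :=
        rpow_midpoint_le ((one_le_div hρ0).2 hp) (by positivity) (by positivity)
    _ = _ := by
        rw [← Real.rpow_mul hX0, ← Real.rpow_mul hY0, mul_div_cancel₀ _ hρ0.ne']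

/-- Absorption of the subcritical power into half of the leading one, uniformly in the
exponents. -/
lemma exists_absorb {lam R P M : ℝ} (hlam : 0 < lam) (hR : 1 < R) (hRP : R < P) (hM : 1 ≤ M) :
    ∃ C : ℝ, 0 ≤ C ∧ ∀ r q t : ℝ, 1 ≤ r → r ≤ R → P ≤ q → q ≤ M → 0 ≤ t →
      lam * (t ^ r / r) ≤ t ^ q / q / 2 + C := by
  -- Beyond `T` one has `2 * lam * M ≤ t ^ (P - R)`; below it the constant takes over.
  set T : ℝ := max 1 ((2 * lam * M) ^ (1 / (P - R))) with hT
  have hT1 : 1 ≤ T := le_max_left _ _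
  refine ⟨lam * T ^ R, by positivity, ?_⟩
  intro r q t hr hrR hq hqM ht
  have hq0 : 0 < q := by linarith
  rcases le_total t T with h | h
  · have h1 : t ^ r ≤ T ^ R := (Real.rpow_le_rpow ht h (by linarith)).trans
      (Real.rpow_le_rpow_of_exponent_le hT1 hrR)
    have h2 : t ^ r / r ≤ t ^ r := div_le_self (by positivity) hr
    have h3 : 0 ≤ t ^ q / q / 2 := by positivity
    have h4 := mul_le_mul_of_nonneg_left (h2.trans h1) hlam.le
    linarith
  · have ht1 : 1 ≤ t := hT1.trans h
    have h1 : 2 * lam * M ≤ t ^ (P - R) := by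
      calc 2 * lam * M = ((2 * lam * M) ^ (1 / (P - R))) ^ (P - R) := by
            rw [← Real.rpow_mul (by positivity), one_div, inv_mul_cancel₀ (by linarith),
              Real.rpow_one]
        _ ≤ t ^ (P - R) :=
            Real.rpow_le_rpow (by positivity) ((le_max_right _ _).trans h) (by linarith)
    have h2 : t ^ (P - R) ≤ t ^ (q - r) := Real.rpow_le_rpow_of_exponent_le ht1 (by linarith)
    have h3 : t ^ q = t ^ r * t ^ (q - r) := by
      rw [← Real.rpow_add (by linarith)]; congr 1; ring
    have h0 : 0 ≤ t ^ r := by positivity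
    have h4 : lam * (t ^ r / r) ≤ lam * t ^ r := by
      gcongr; exact div_le_self h0 hr
    have h5 : lam * t ^ r ≤ t ^ q / q / 2 := by
      rw [div_div, le_div_iff₀ (by positivity), h3]
      have : 2 * lam * q ≤ t ^ (q - r) := by
        have : 2 * lam * q ≤ 2 * lam * M := by gcongr
        linarith
      nlinarith
    have : 0 ≤ lam * T ^ R := by positivity
    linarith

/-! ### Modulars with variable exponent -/

lemma add_rpow_le_two {q M x y : ℝ} (hq : 0 ≤ q) (hM : q ≤ M) (hx : 0 ≤ x) (hy : 0 ≤ y) :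
    (x + y) ^ q ≤ 2 ^ M * (x ^ q + y ^ q) := by
  have h2 : (2:ℝ) ^ q ≤ 2 ^ M := Real.rpow_le_rpow_of_exponent_le (by norm_num) hM
  have hx' := Real.rpow_nonneg hx q
  have hy' := Real.rpow_nonneg hy q
  have key : ∀ u v : ℝ, 0 ≤ u → 0 ≤ v → u ≤ v → (u + v) ^ q ≤ 2 ^ M * (u ^ q + v ^ q) := by
    intro u v hu hv huv
    have hu' := Real.rpow_nonneg hu q
    have hv' := Real.rpow_nonneg hv q
    calc (u + v) ^ q ≤ (2 * v) ^ q := Real.rpow_le_rpow (by linarith) (by linarith) hq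
      _ = 2 ^ q * v ^ q := Real.mul_rpow (by norm_num) hv
      _ ≤ 2 ^ M * (u ^ q + v ^ q) := by gcongr; linarith
  rcases le_total x y with h | h
  · exact key x y hx hy h
  · rw [add_comm x y, add_comm (x ^ q)]; exact key y x hy hx h

lemma abs_rpow_sub_two_mul {q u : ℝ} (hq : 1 < q) : |u| ^ (q - 2) * |u| = |u| ^ (q - 1) := by
  rcases eq_or_ne u 0 with rfl | h
  · simp [Real.zero_rpow (show q - 1 ≠ 0 by linarith)]
  · have : 0 < |u| := abs_pos.2 h
    rw [← Real.rpow_add_one this.ne']; congr 1; ring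

/-- Gâteaux derivative of a weighted modular with variable exponent. -/
lemma hasDerivAt_modular {α : Type*} [MeasurableSpace α] {μ : Measure α} {k q a b : α → ℝ}
    {M : ℝ} (hk : AEMeasurable k μ) (hqm : AEMeasurable q μ) (ha : AEMeasurable a μ)
    (hb : AEMeasurable b μ) (hk0 : ∀ᵐ x ∂μ, 0 ≤ k x) (hq : ∀ᵐ x ∂μ, 1 < q x ∧ q x ≤ M)
    (hai : Integrable (fun x => |a x| ^ q x * k x) μ)
    (hbi : Integrable (fun x => |b x| ^ q x * k x) μ) :
    HasDerivAt (fun t : ℝ => ∫ x, |a x + t * b x| ^ q x * k x / q x ∂μ)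
      (∫ x, |a x| ^ (q x - 2) * a x * b x * k x ∂μ) 0 := by
  have hm : ∀ t : ℝ, AEStronglyMeasurable (fun x => |a x + t * b x| ^ q x * k x / q x) μ := by
    intro t
    have h1 : AEMeasurable (fun x => |a x + t * b x|) μ :=
      continuous_abs.measurable.comp_aemeasurable (ha.add (hb.const_mul t))
    exact (((h1.pow hqm).mul hk).div hqm).aestronglyMeasurable
  have hm' : AEStronglyMeasurable
      (fun x => |a x + 0 * b x| ^ (q x - 2) * (a x + 0 * b x) * b x * k x) μ := by
    have h1 : AEMeasurable (fun x => |a x + 0 * b x|) μ :=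
      continuous_abs.measurable.comp_aemeasurable (ha.add (hb.const_mul 0))
    exact ((((h1.pow (hqm.sub_const 2)).mul (ha.add (hb.const_mul 0))).mul hb).mul
      hk).aestronglyMeasurable
  have hi0 : Integrable (fun x => |a x + 0 * b x| ^ q x * k x / q x) μ := by
    refine hai.mono (hm 0) ?_
    filter_upwards [hq, hk0] with x hx hkx
    have h0 : 0 ≤ |a x| ^ q x * k x := by positivity
    simp only [zero_mul, add_zero]
    rw [norm_div, Real.norm_of_nonneg h0, Real.norm_of_nonneg (by linarith : 0 ≤ q x)]
    exact div_le_self h0 hx.1.le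
  have h := hasDerivAt_integral_of_dominated_loc_of_deriv_le (μ := μ) (𝕜 := ℝ) (x₀ := (0:ℝ))
    (s := Metric.ball (0:ℝ) 1)
    (F := fun t x => |a x + t * b x| ^ q x * k x / q x)
    (F' := fun t x => |a x + t * b x| ^ (q x - 2) * (a x + t * b x) * b x * k x)
    (bound := fun x => 2 ^ M * (|a x| ^ q x * k x + |b x| ^ q x * k x))
    (Metric.ball_mem_nhds _ one_pos) (Eventually.of_forall hm) hi0 hm' ?_
    ((hai.add hbi).const_mul _) ?_
  · simpa using h.2
  · filter_upwards [hq, hk0] with x hx hkx t ht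
    have ht1 : |t| ≤ 1 := by simpa using (Metric.mem_ball.1 ht).le
    have hu : |a x + t * b x| ≤ |a x| + |b x| := by
      refine (abs_add_le _ _).trans ?_
      rw [abs_mul]
      nlinarith [abs_nonneg (b x)]
    rw [norm_mul, norm_mul, norm_mul, Real.norm_eq_abs, Real.norm_eq_abs, Real.norm_eq_abs,
      Real.norm_of_nonneg hkx, abs_of_nonneg (Real.rpow_nonneg (abs_nonneg _) _),
      abs_rpow_sub_two_mul hx.1, ← add_mul, ← mul_assoc]
    refine mul_le_mul_of_nonneg_right ?_ hkx
    calc |a x + t * b x| ^ (q x - 1) * |b x|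
        ≤ (|a x| + |b x|) ^ (q x - 1) * (|a x| + |b x|) := by
          gcongr
          · linarith
          · linarith [abs_nonneg (a x)]
      _ = (|a x| + |b x|) ^ q x := by
          have h0 : 0 ≤ |a x| + |b x| := by positivity
          conv_rhs => rw [show q x = (q x - 1) + 1 by ring]
          rw [Real.rpow_add_one' h0 (by linarith)]
      _ ≤ _ := add_rpow_le_two (by linarith) hx.2 (abs_nonneg _) (abs_nonneg _)
  · filter_upwards [hq] with x hx t _
    have h1 : HasDerivAt (fun t : ℝ => a x + t * b x) (b x) t := by
      simpa using ((hasDerivAt_id t).mul_const (b x)).const_add (a x)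
    have h2 := (((hasDerivAt_abs_rpow (a x + t * b x) hx.1).comp t h1).mul_const (k x)).div_const
      (q x)
    have h3 : q x ≠ 0 := by linarith
    refine h2.congr_deriv ?_
    field_simp

lemma integrable_modular_add {α : Type*} [MeasurableSpace α] {μ : Measure α} {k q a b : α → ℝ}
    {M : ℝ} (hk : AEMeasurable k μ) (hqm : AEMeasurable q μ) (ha : AEMeasurable a μ)
    (hb : AEMeasurable b μ) (hk0 : ∀ᵐ x ∂μ, 0 ≤ k x) (hq : ∀ᵐ x ∂μ, 1 < q x ∧ q x ≤ M)
    (hai : Integrable (fun x => |a x| ^ q x * k x) μ)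
    (hbi : Integrable (fun x => |b x| ^ q x * k x) μ) (t : ℝ) :
    Integrable (fun x => |a x + t * b x| ^ q x * k x) μ := by
  have hm : AEStronglyMeasurable (fun x => |a x + t * b x| ^ q x * k x) μ := by
    have h1 : AEMeasurable (fun x => |a x + t * b x|) μ :=
      continuous_abs.measurable.comp_aemeasurable (ha.add (hb.const_mul t))
    exact ((h1.pow hqm).mul hk).aestronglyMeasurable
  refine ((hai.add (hbi.const_mul ((max 1 |t|) ^ M))).const_mul (2 ^ M)).mono' hm ?_
  filter_upwards [hq, hk0] with x hx hkx
  have h0 : (0:ℝ) ≤ q x := by linarith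
  have h1 : |t| ^ q x ≤ (max 1 |t|) ^ M :=
    (Real.rpow_le_rpow (abs_nonneg t) (le_max_right 1 |t|) h0).trans
      (Real.rpow_le_rpow_of_exponent_le (le_max_left _ _) hx.2)
  have h2 : |a x + t * b x| ≤ |a x| + |t| * |b x| := by
    rw [← abs_mul]; exact abs_add_le _ _
  have hbx := Real.rpow_nonneg (abs_nonneg (b x)) (q x)
  rw [Real.norm_of_nonneg (by positivity)]
  calc |a x + t * b x| ^ q x * k x ≤ (|a x| + |t| * |b x|) ^ q x * k x := by gcongr
    _ ≤ (2 ^ M * (|a x| ^ q x + (|t| * |b x|) ^ q x)) * k x := by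
        gcongr; exact add_rpow_le_two h0 hx.2 (abs_nonneg _) (by positivity)
    _ = (2 ^ M * (|a x| ^ q x + |t| ^ q x * |b x| ^ q x)) * k x := by
        rw [Real.mul_rpow (abs_nonneg _) (abs_nonneg _)]
    _ ≤ (2 ^ M * (|a x| ^ q x + (max 1 |t|) ^ M * |b x| ^ q x)) * k x := by gcongr
    _ = _ := by simp only [Pi.add_apply]; ring

/-! ### Almost everywhere convergent minimising sequences -/

/-- Minimising sequences of a quasi-convex functional on a finite measure space can be chosen
convergent almost everywhere in `[0, ∞]`, without any compactness: among almost minimisers one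
also almost minimises the strictly convex functional `∫ exp (-g)`, whose midpoint gap
`½ ∫ (exp (-g / 2) - exp (-h / 2))²` makes `exp (-g / 2)` a Cauchy sequence in `L²`. -/
lemma exists_minimizing_seq {α : Type*} [MeasurableSpace α] {μ : Measure α} [IsFiniteMeasure μ]
    {K : Set (α → ℝ)} {E : (α → ℝ) → ℝ≥0∞}
    (hKm : ∀ g ∈ K, Measurable g) (hK0 : ∀ g ∈ K, ∀ x, 0 ≤ g x)
    (hfin : ⨅ g ∈ K, E g ≠ ⊤)
    (hmid : ∀ g ∈ K, ∀ h ∈ K, (fun x => (g x + h x) / 2) ∈ K)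
    (hE : ∀ g ∈ K, ∀ h ∈ K, ∀ c, E g ≤ c → E h ≤ c → E (fun x => (g x + h x) / 2) ≤ c) :
    ∃ f : ℕ → α → ℝ, (∀ n, f n ∈ K) ∧ Tendsto (fun n => E (f n)) atTop (𝓝 (⨅ g ∈ K, E g)) ∧
      ∀ᵐ x ∂μ, ∃ l : ℝ, Tendsto (fun n => Real.exp (-(f n x) / 2)) atTop (𝓝 l) := by
  set m := ⨅ g ∈ K, E g with hm
  set ε : ℕ → ℝ≥0∞ := fun n => ENNReal.ofReal (1 / ((n : ℝ) + 1)) with hε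
  have hε0 : Tendsto (fun n : ℕ => 1 / ((n : ℝ) + 1)) atTop (𝓝 0) :=
    tendsto_one_div_add_atTop_nhds_zero_nat
  have hεt : Tendsto ε atTop (𝓝 0) := by
    simpa [hε, Function.comp_def] using (ENNReal.continuous_ofReal.tendsto 0).comp hε0
  have hεanti : ∀ {i j : ℕ}, i ≤ j → 1 / ((j : ℝ) + 1) ≤ 1 / ((i : ℝ) + 1) := fun h =>
    Nat.one_div_le_one_div h
  -- `C n` consists of the `ε n`-minimisers of `E`; it is stable under midpoints.
  let C : ℕ → Set (α → ℝ) := fun n => {g | g ∈ K ∧ E g ≤ m + ε n}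
  have hCanti : ∀ {i j : ℕ}, i ≤ j → C j ⊆ C i := fun h g hg =>
    ⟨hg.1, hg.2.trans (by gcongr; exact ENNReal.ofReal_le_ofReal (hεanti h))⟩
  have hCne : ∀ n, (C n).Nonempty := by
    intro n
    have h1 : m < m + ε n := ENNReal.lt_add_right hfin (by
      simp only [hε, ne_eq, ENNReal.ofReal_eq_zero, not_le]; positivity)
    obtain ⟨g, hg⟩ := iInf_lt_iff.1 (hm ▸ h1)
    obtain ⟨hgK, hg⟩ := iInf_lt_iff.1 hg
    exact ⟨g, hgK, hg.le⟩
  let Φ : (α → ℝ) → ℝ := fun g => ∫ x, Real.exp (-(g x)) ∂μ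
  have hbd : ∀ {g h : α → ℝ}, g ∈ K → h ∈ K →
      Integrable (fun x => Real.exp (-((g x + h x) / 2))) μ := by
    intro g h hg hh
    refine Integrable.of_bound (C := 1)
      ((((hKm g hg).add (hKm h hh)).div_const 2).neg.exp).aestronglyMeasurable
      (Eventually.of_forall fun x => ?_)
    rw [Real.norm_of_nonneg (Real.exp_nonneg _), Real.exp_le_one_iff]
    linarith [hK0 g hg x, hK0 h hh x]
  have hbd1 : ∀ {g : α → ℝ}, g ∈ K → Integrable (fun x => Real.exp (-(g x))) μ := by
    intro g hg
    simpa using hbd hg hg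
  have hΦ0 : ∀ g, 0 ≤ Φ g := fun g => integral_nonneg fun x => Real.exp_nonneg _
  have hΦ1 : ∀ g ∈ K, Φ g ≤ μ.real Set.univ := by
    intro g hg
    have : Φ g ≤ ∫ _, (1:ℝ) ∂μ := integral_mono (hbd1 hg) (integrable_const _) fun x => by
      simpa using hK0 g hg x
    simpa using this
  let A : ℕ → ℝ := fun n => sInf (Φ '' C n)
  have hAbdd : ∀ n, BddBelow (Φ '' C n) := fun n => ⟨0, by rintro _ ⟨g, -, rfl⟩; exact hΦ0 g⟩
  have hAle : ∀ n, ∀ g ∈ C n, A n ≤ Φ g := fun n g hg => csInf_le (hAbdd n) ⟨g, hg, rfl⟩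
  have hAmono : Monotone A := fun i j h =>
    csInf_le_csInf (hAbdd i) ((hCne j).image _) (Set.image_mono (hCanti h))
  have hAub : BddAbove (Set.range A) := by
    refine ⟨μ.real Set.univ, ?_⟩
    rintro _ ⟨n, rfl⟩
    obtain ⟨g, hg⟩ := hCne n
    exact (hAle n g hg).trans (hΦ1 g hg.1)
  set L := ⨆ n, A n with hL
  have hAL : Tendsto A atTop (𝓝 L) := tendsto_atTop_ciSup hAmono hAub
  have hex : ∀ n : ℕ, ∃ g ∈ C n, Φ g < A n + 1 / ((n : ℝ) + 1) := by
    intro n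
    obtain ⟨_, ⟨g, hg, rfl⟩, h⟩ := exists_lt_of_csInf_lt ((hCne n).image Φ)
      (show sInf (Φ '' C n) < A n + 1 / ((n : ℝ) + 1) from lt_add_of_pos_right _ (by positivity))
    exact ⟨g, hg, h⟩
  choose f hfC hfΦ using hex
  have hfE : Tendsto (fun n => E (f n)) atTop (𝓝 m) := by
    refine tendsto_of_tendsto_of_tendsto_of_le_of_le tendsto_const_nhds
      (g := fun _ => m) (h := fun n => m + ε n) ?_ (fun n => ?_) (fun n => (hfC n).2)
    · simpa using tendsto_const_nhds.add hεt
    · exact iInf₂_le _ (hfC n).1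
  have hmemLp : ∀ n, MemLp (fun x => Real.exp (-(f n x) / 2)) 2 μ := by
    intro n
    refine MemLp.of_bound ((hKm _ (hfC n).1).neg.div_const 2).exp.aestronglyMeasurable 1
      (Eventually.of_forall fun x => ?_)
    rw [Real.norm_of_nonneg (Real.exp_nonneg _), Real.exp_le_one_iff]
    linarith [hK0 _ (hfC n).1 x]
  let U : ℕ → Lp ℝ 2 μ := fun n => (hmemLp n).toLp
  -- The squared distance is the defect of midpoint convexity of `Φ`.
  have hdist : ∀ i j, dist (U i) (U j) ^ 2 =
      Φ (f i) + Φ (f j) - 2 * Φ (fun x => (f i x + f j x) / 2) := by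
    intro i j
    rw [dist_eq_norm, ← real_inner_self_eq_norm_sq, L2.inner_def]
    have hi := hbd1 (hfC i).1
    have hj := hbd1 (hfC j).1
    have hij := hbd (hfC i).1 (hfC j).1
    rw [show Φ (f i) + Φ (f j) - 2 * Φ (fun x => (f i x + f j x) / 2) =
      ∫ x, (Real.exp (-(f i x)) + Real.exp (-(f j x)) -
        2 * Real.exp (-((f i x + f j x) / 2))) ∂μ by
      rw [integral_sub (by exact hi.add hj) (hij.const_mul 2), integral_add hi hj,
        integral_const_mul]]
    refine integral_congr_ae ?_
    filter_upwards [Lp.coeFn_sub (U i) (U j), (hmemLp i).coeFn_toLp, (hmemLp j).coeFn_toLp]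
      with x h1 h2 h3
    rw [h1, Pi.sub_apply, h2, h3]
    have e1 : Real.exp (-(f i x)) = Real.exp (-(f i x) / 2) * Real.exp (-(f i x) / 2) := by
      rw [← Real.exp_add]; ring_nf
    have e2 : Real.exp (-(f j x)) = Real.exp (-(f j x) / 2) * Real.exp (-(f j x) / 2) := by
      rw [← Real.exp_add]; ring_nf
    have e3 : Real.exp (-((f i x + f j x) / 2)) =
        Real.exp (-(f i x) / 2) * Real.exp (-(f j x) / 2) := by
      rw [← Real.exp_add]; ring_nf
    rw [e1, e2, e3]
    rw [real_inner_self_eq_norm_sq, Real.norm_eq_abs, sq_abs]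
    ring
  have hU : CauchySeq U := by
    refine cauchySeq_of_le_tendsto_0
      (fun n => Real.sqrt (2 * (L - A n) + 2 * (1 / ((n : ℝ) + 1)))) ?_ ?_
    · intro i j n hi hj
      refine Real.le_sqrt_of_sq_le ?_
      rw [hdist]
      have h1 := hfΦ i
      have h2 := hfΦ j
      have h3 := hεanti hi
      have h4 := hεanti hj
      have h5 : A i ≤ L := le_ciSup hAub i
      have h6 : A j ≤ L := le_ciSup hAub j
      have hi' := hCanti hi (hfC i)
      have hj' := hCanti hj (hfC j)
      -- The midpoint is a competitor for `A n`, so `2 * Φ (midpoint) ≥ 2 * A n`.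
      have h7 := hAle n _ ⟨hmid _ hi'.1 _ hj'.1, hE _ hi'.1 _ hj'.1 _ hi'.2 hj'.2⟩
      linarith
    · have h := ((tendsto_const_nhds (x := L)).sub hAL).const_mul 2 |>.add (hε0.const_mul 2)
      have h' := (Real.continuous_sqrt.tendsto _).comp h
      simpa [Function.comp_def] using h'
  obtain ⟨u, hu⟩ := cauchySeq_tendsto_of_complete hU
  obtain ⟨ns, hns, hae⟩ := (tendstoInMeasure_of_tendsto_Lp hu).exists_seq_tendsto_ae
  refine ⟨fun n => f (ns n), fun n => (hfC _).1, hfE.comp hns.tendsto_atTop, ?_⟩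
  have hall : ∀ᵐ x ∂μ, ∀ n, (U n : α → ℝ) x = Real.exp (-(f n x) / 2) :=
    ae_all_iff.2 fun n => (hmemLp n).coeFn_toLp
  filter_upwards [hae, hall] with x hx hx'
  exact ⟨u x, by simpa only [hx'] using hx⟩

/-! ### The shifted energy -/

/-- The structural facts about the domain, the exponents and the absorption constant `C` on
which the variational argument relies. Here `P` and `M` bound the exponents `p i`, `pM` from below
and above, and `R` bounds the subcritical exponent `r` from above. -/
structure Setting {N : ℕ} (Ω : Set (Euc N)) (Q : Set (Euc N × Euc N)) (s : ℝ)
    (p : Fin N → Euc N × Euc N → ℝ) (pM r : Euc N → ℝ) (P M R lam C : ℝ) : Prop where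
  s0 : 0 < s
  s1 : s < 1
  mΩ : MeasurableSet Ω
  fin : volume Ω < ⊤
  mQ : MeasurableSet Q
  mp : ∀ i, AEMeasurable (p i) (volume.restrict Q)
  mpM : AEMeasurable pM (volume.restrict Ω)
  mr : AEMeasurable r (volume.restrict Ω)
  R1 : 1 < R
  RP : R < P
  PM : P ≤ M
  hp : ∀ i, ∀ z ∈ Q, P ≤ p i z ∧ p i z ≤ M
  hpM : ∀ x ∈ Ω, P ≤ pM x ∧ pM x ≤ M
  hr : ∀ x ∈ Ω, 1 < r x ∧ r x ≤ R
  lam0 : 0 < lam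
  C0 : 0 ≤ C
  absorb : ∀ x ∈ Ω, ∀ t : ℝ, 0 ≤ t → lam * (t ^ r x / r x) ≤ t ^ pM x / pM x / 2 + C

/-- Integrand of the Gagliardo part of the energy. -/
def gagInt {N : ℕ} (s : ℝ) (p : Euc N × Euc N → ℝ) (w : Euc N → ℝ) (z : Euc N × Euc N) : ℝ :=
  |w z.1 - w z.2| ^ p z / ‖z.1 - z.2‖ ^ (s * p z + N) / p z

/-- Density of the zero-order part of the energy at the value `t`, shifted by `C`. -/
def potInt {N : ℕ} (pM r : Euc N → ℝ) (lam C : ℝ) (x : Euc N) (t : ℝ) : ℝ :=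
  |t| ^ pM x / pM x - lam * (|t| ^ r x / r x) + C

/-- The energy `Jfun` shifted by the constant `C * volume Ω`; the shift makes all integrands
nonnegative, so that the energy is a `[0, ∞]`-valued functional defined on all functions. -/
def energy {N : ℕ} (Ω : Set (Euc N)) (Q : Set (Euc N × Euc N)) (s : ℝ)
    (p : Fin N → Euc N × Euc N → ℝ) (pM r : Euc N → ℝ) (lam C : ℝ) (w : Euc N → ℝ) : ℝ≥0∞ :=
  (∑ i, ∫⁻ z in Q, ENNReal.ofReal (gagInt s (p i) w z)) +
    ∫⁻ x in Ω, ENNReal.ofReal (potInt pM r lam C x (w x))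

namespace Setting

variable {N : ℕ} {Ω : Set (Euc N)} {Q : Set (Euc N × Euc N)} {s : ℝ}
  {p : Fin N → Euc N × Euc N → ℝ} {pM r : Euc N → ℝ} {P M R lam C : ℝ}

lemma aeQ {q : Euc N × Euc N → Prop} (S : Setting Ω Q s p pM r P M R lam C)
    (h : ∀ z ∈ Q, q z) : ∀ᵐ z ∂(volume.restrict Q), q z :=
  (ae_restrict_iff' S.mQ).2 (Eventually.of_forall h)

lemma aeΩ {q : Euc N → Prop} (S : Setting Ω Q s p pM r P M R lam C)
    (h : ∀ z ∈ Ω, q z) : ∀ᵐ z ∂(volume.restrict Ω), q z :=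
  (ae_restrict_iff' S.mΩ).2 (Eventually.of_forall h)

lemma P1 (S : Setting Ω Q s p pM r P M R lam C) : 1 < P := S.R1.trans S.RP

lemma p1 (S : Setting Ω Q s p pM r P M R lam C) (i : Fin N) {z} (hz : z ∈ Q) : 1 < p i z :=
  S.P1.trans_le (S.hp i z hz).1

lemma pM1 (S : Setting Ω Q s p pM r P M R lam C) {x} (hx : x ∈ Ω) : 1 < pM x :=
  S.P1.trans_le (S.hpM x hx).1

lemma aemeasurable_diff {w : Euc N → ℝ} (hw : Measurable w) :
    AEMeasurable (fun z : Euc N × Euc N => w z.1 - w z.2) (volume.restrict Q) :=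
  ((hw.comp measurable_fst).sub (hw.comp measurable_snd)).aemeasurable

lemma aemeasurable_kernel (S : Setting Ω Q s p pM r P M R lam C) (i : Fin N) :
    AEMeasurable (fun z : Euc N × Euc N => ‖z.1 - z.2‖ ^ (s * p i z + N)) (volume.restrict Q) :=
  AEMeasurable.pow (by fun_prop) (((S.mp i).const_mul s).add_const _)

lemma aemeasurable_gagInt (S : Setting Ω Q s p pM r P M R lam C) (i : Fin N) {w : Euc N → ℝ}
    (hw : Measurable w) : AEMeasurable (gagInt s (p i) w) (volume.restrict Q) :=
  (((continuous_abs.measurable.comp_aemeasurable (aemeasurable_diff hw)).pow (S.mp i)).div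
    (S.aemeasurable_kernel i)).div (S.mp i)

lemma aemeasurable_potInt (S : Setting Ω Q s p pM r P M R lam C) {w : Euc N → ℝ}
    (hw : Measurable w) :
    AEMeasurable (fun x => potInt pM r lam C x (w x)) (volume.restrict Ω) := by
  have h : AEMeasurable (fun x => |w x|) (volume.restrict Ω) :=
    continuous_abs.measurable.comp_aemeasurable hw.aemeasurable
  exact (((h.pow S.mpM).div S.mpM).sub (((h.pow S.mr).div S.mr).const_mul lam)).add_const C

lemma gagInt_nonneg (S : Setting Ω Q s p pM r P M R lam C) (i : Fin N) (w : Euc N → ℝ) {z}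
    (hz : z ∈ Q) : 0 ≤ gagInt s (p i) w z := by
  have := S.p1 i hz
  unfold gagInt; positivity

lemma half_le_potInt (S : Setting Ω Q s p pM r P M R lam C) {x} (hx : x ∈ Ω) (t : ℝ) :
    |t| ^ pM x / pM x / 2 ≤ potInt pM r lam C x t := by
  have := S.absorb x hx |t| (abs_nonneg t)
  unfold potInt; linarith

lemma potInt_nonneg (S : Setting Ω Q s p pM r P M R lam C) {x} (hx : x ∈ Ω) (t : ℝ) :
    0 ≤ potInt pM r lam C x t := by
  have := S.pM1 hx
  exact le_trans (by positivity) (S.half_le_potInt hx t)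

lemma _root_.ae_pair {q : Euc N → Prop} (h : ∀ᵐ x : Euc N, q x) (Q : Set (Euc N × Euc N)) :
    ∀ᵐ z ∂((volume : Measure (Euc N × Euc N)).restrict Q), q z.1 ∧ q z.2 :=
  ae_restrict_of_ae ((Measure.quasiMeasurePreserving_fst.ae h).and
    (Measure.quasiMeasurePreserving_snd.ae h))

lemma _root_.energy_congr {u v : Euc N → ℝ} (h : u =ᵐ[volume] v) :
    energy Ω Q s p pM r lam C u = energy Ω Q s p pM r lam C v := by
  unfold energy
  congr 1
  · refine Finset.sum_congr rfl fun i _ => lintegral_congr_ae ?_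
    filter_upwards [ae_pair h Q] with z hz
    simp only [gagInt, hz.1, hz.2]
  · refine lintegral_congr_ae ?_
    filter_upwards [ae_restrict_of_ae h] with x hx
    rw [hx]

lemma energy_abs_le (S : Setting Ω Q s p pM r P M R lam C) (u : Euc N → ℝ) :
    energy Ω Q s p pM r lam C (fun x => |u x|) ≤ energy Ω Q s p pM r lam C u := by
  unfold energy
  refine add_le_add (Finset.sum_le_sum fun i _ => ?_) ?_
  · refine lintegral_mono_ae (S.aeQ fun z hz => ENNReal.ofReal_le_ofReal ?_)
    have := S.p1 i hz
    unfold gagInt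
    gcongr ?_ ^ _ / _ / _
    exact abs_abs_sub_abs_le_abs_sub _ _
  · simp [potInt]

/-- In the variable `g = w ^ R`, `w ≥ 0`, the energy is midpoint quasi-convex. -/
lemma energy_midpoint (S : Setting Ω Q s p pM r P M R lam C) {g h : Euc N → ℝ}
    (hg : Measurable g) (hh : Measurable h) (hg0 : ∀ x, 0 ≤ g x) (hh0 : ∀ x, 0 ≤ h x) {c : ℝ≥0∞}
    (hgc : energy Ω Q s p pM r lam C (fun x => g x ^ (1 / R)) ≤ c)
    (hhc : energy Ω Q s p pM r lam C (fun x => h x ^ (1 / R)) ≤ c) :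
    energy Ω Q s p pM r lam C (fun x => ((g x + h x) / 2) ^ (1 / R)) ≤ c := by
  have hR0 : 0 < R := one_pos.trans S.R1
  have mg : Measurable (fun x => g x ^ (1 / R)) := hg.pow_const _
  have mh : Measurable (fun x => h x ^ (1 / R)) := hh.pow_const _
  have key : 2 * energy Ω Q s p pM r lam C (fun x => ((g x + h x) / 2) ^ (1 / R)) ≤
      energy Ω Q s p pM r lam C (fun x => g x ^ (1 / R)) +
        energy Ω Q s p pM r lam C (fun x => h x ^ (1 / R)) := by
    unfold energy
    rw [add_add_add_comm, mul_add, Finset.mul_sum, ← Finset.sum_add_distrib]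
    refine add_le_add (Finset.sum_le_sum fun i _ => ?_) ?_
    · rw [← lintegral_add_left' (S.aemeasurable_gagInt i mg).ennreal_ofReal,
        ← lintegral_const_mul' _ _ (by norm_num)]
      refine lintegral_mono_ae (S.aeQ fun z hz => ?_)
      rw [← ENNReal.ofReal_add (S.gagInt_nonneg i _ hz) (S.gagInt_nonneg i _ hz),
        show (2 : ℝ≥0∞) = ENNReal.ofReal 2 by norm_num, ← ENNReal.ofReal_mul (by norm_num)]
      refine ENNReal.ofReal_le_ofReal ?_
      have h1 := S.p1 i hz
      have h2 := hidden_convex S.R1.le (S.RP.le.trans (S.hp i z hz).1) (hg0 z.1) (hg0 z.2)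
        (hh0 z.1) (hh0 z.2)
      unfold gagInt
      rw [← add_div, ← add_div, ← mul_div_assoc, ← mul_div_assoc]
      gcongr ?_ / _ / _
      linarith
    · rw [← lintegral_add_left' (S.aemeasurable_potInt mg).ennreal_ofReal,
        ← lintegral_const_mul' _ _ (by norm_num)]
      refine lintegral_mono_ae (S.aeΩ fun x hx => ?_)
      rw [← ENNReal.ofReal_add (S.potInt_nonneg hx _) (S.potInt_nonneg hx _),
        show (2 : ℝ≥0∞) = ENNReal.ofReal 2 by norm_num, ← ENNReal.ofReal_mul (by norm_num)]
      refine ENNReal.ofReal_le_ofReal ?_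
      have hpM := S.pM1 hx
      have hr := S.hr x hx
      have e : ∀ t : ℝ, 0 ≤ t → ∀ q : ℝ, |t ^ (1 / R)| ^ q = t ^ (q / R) := fun t ht q => by
        rw [abs_of_nonneg (Real.rpow_nonneg ht _), ← Real.rpow_mul ht]; congr 1; ring
      have hm : 0 ≤ (g x + h x) / 2 := by linarith [hg0 x, hh0 x]
      -- `t ^ (pM / R)` is convex and `t ^ (r / R)` concave because `r ≤ R ≤ pM`.
      have h1 := rpow_midpoint_le (q := pM x / R)
        ((one_le_div hR0).2 (S.RP.le.trans (S.hpM x hx).1)) (hg0 x) (hh0 x)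
      have h2 := le_rpow_midpoint (q := r x / R) (div_nonneg (by linarith) hR0.le)
        ((div_le_one hR0).2 hr.2) (hg0 x) (hh0 x)
      unfold potInt
      rw [e _ hm, e _ (hg0 x), e _ (hh0 x), e _ hm, e _ (hg0 x), e _ (hh0 x)]
      have h3 := div_le_div_of_nonneg_right h1 (show 0 ≤ pM x by linarith)
      have h4 := mul_le_mul_of_nonneg_left
        (div_le_div_of_nonneg_right h2 (show 0 ≤ r x by linarith)) S.lam0.le
      have e1 : (g x ^ (pM x / R) + h x ^ (pM x / R)) / 2 / pM x =
        (g x ^ (pM x / R) / pM x + h x ^ (pM x / R) / pM x) / 2 := by ring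
      have e2 : lam * ((g x ^ (r x / R) + h x ^ (r x / R)) / 2 / r x) =
        (lam * (g x ^ (r x / R) / r x) + lam * (h x ^ (r x / R) / r x)) / 2 := by ring
      linarith
  have h2 := key.trans (add_le_add hgc hhc)
  rw [← two_mul] at h2
  exact (ENNReal.mul_le_mul_iff_right (by norm_num) (by norm_num)).1 h2

/-- Lower semicontinuity of the energy along almost everywhere convergence (Fatou). -/
lemma energy_le_liminf (S : Setting Ω Q s p pM r P M R lam C) {f : ℕ → Euc N → ℝ} {w : Euc N → ℝ}
    (hf : ∀ n, Measurable (f n)) (hfw : ∀ᵐ x, Tendsto (fun n => f n x) atTop (𝓝 (w x))) :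
    energy Ω Q s p pM r lam C w ≤
      liminf (fun n => energy Ω Q s p pM r lam C (f n)) atTop := by
  have hadd : ∀ a b : ℕ → ℝ≥0∞,
      liminf a atTop + liminf b atTop ≤ liminf (fun n => a n + b n) atTop :=
    fun a b => by
      simp only [liminf_eq_iSup_iInf_of_nat]
      rw [ENNReal.iSup_add_iSup_of_monotone]
      · exact iSup_mono fun n => le_iInf₂ fun i hi => add_le_add (iInf₂_le i hi) (iInf₂_le i hi)
      · exact fun m n h => le_iInf₂ fun i hi => iInf₂_le i (h.trans hi)
      · exact fun m n h => le_iInf₂ fun i hi => iInf₂_le i (h.trans hi)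
  have hsum : ∀ (T : Finset (Fin N)) (a : Fin N → ℕ → ℝ≥0∞),
      ∑ i ∈ T, liminf (a i) atTop ≤ liminf (fun n => ∑ i ∈ T, a i n) atTop := by
    classical
    intro T a
    induction T using Finset.induction_on with
    | empty => simp
    | insert j T hj ih =>
      simp only [Finset.sum_insert hj]
      exact (add_le_add_right ih _).trans (hadd _ _)
  unfold energy
  refine le_trans (add_le_add ((Finset.sum_le_sum fun i _ => ?_).trans (hsum _ _)) ?_)
    (hadd _ _)
  · refine le_trans (lintegral_mono_ae ?_)
      (lintegral_liminf_le' fun n => (S.aemeasurable_gagInt i (hf n)).ennreal_ofReal)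
    filter_upwards [ae_pair hfw Q, S.aeQ (fun z hz => S.p1 i hz)] with z hz hp
    refine (Tendsto.liminf_eq ?_).ge
    refine (ENNReal.continuous_ofReal.tendsto _).comp ?_
    exact ((((hz.1.sub hz.2).abs).rpow_const (Or.inr (by linarith))).div_const _).div_const _
  · refine le_trans (lintegral_mono_ae ?_)
      (lintegral_liminf_le' fun n => (S.aemeasurable_potInt (hf n)).ennreal_ofReal)
    filter_upwards [ae_restrict_of_ae hfw, S.aeΩ (fun x hx => S.pM1 hx), S.aeΩ S.hr]
      with x hx hpM hr
    refine (Tendsto.liminf_eq ?_).ge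
    refine (ENNReal.continuous_ofReal.tendsto _).comp ?_
    exact (((hx.abs.rpow_const (Or.inr (by linarith))).div_const _).sub
      (((hx.abs.rpow_const (Or.inr (by linarith))).div_const _).const_mul lam)).add_const C

/-! ### Existence of a minimiser -/

lemma lintegral_const_lt_top (S : Setting Ω Q s p pM r P M R lam C) (c : ℝ) :
    ∫⁻ _ in Ω, ENNReal.ofReal c < ⊤ := by
  rw [setLIntegral_const]
  exact ENNReal.mul_lt_top ENNReal.ofReal_lt_top S.fin

/-- The value of the energy at the zero function. -/
lemma energy_zero (S : Setting Ω Q s p pM r P M R lam C) :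
    energy Ω Q s p pM r lam C (fun _ => 0) = ∫⁻ _ in Ω, ENNReal.ofReal C := by
  unfold energy
  have h1 : ∀ i, ∫⁻ z in Q, ENNReal.ofReal (gagInt s (p i) (fun _ => 0) z) = 0 := fun i => by
    rw [lintegral_congr_ae (g := fun _ => 0) (S.aeQ fun z hz => ?_), lintegral_zero]
    have := S.p1 i hz
    simp [gagInt, Real.zero_rpow (show p i z ≠ 0 by linarith)]
  simp only [h1, Finset.sum_const_zero, zero_add]
  refine lintegral_congr_ae (S.aeΩ fun x hx => ?_)
  have h2 := S.pM1 hx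
  have h3 := (S.hr x hx).1
  simp [potInt, Real.zero_rpow (show pM x ≠ 0 by linarith),
    Real.zero_rpow (show r x ≠ 0 by linarith)]

/-- Existence of a global minimiser of the energy. Convexity in the variable `w ^ R` replaces
weak compactness, and Fatou's lemma replaces a compact embedding. -/
lemma exists_minimizer (S : Setting Ω Q s p pM r P M R lam C) :
    ∃ w : Euc N → ℝ, Measurable w ∧ (∀ x, x ∉ Ω → w x = 0) ∧
      energy Ω Q s p pM r lam C w < ⊤ ∧
      ∀ u : Euc N → ℝ, Measurable u → (∀ᵐ x, x ∉ Ω → u x = 0) →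
        energy Ω Q s p pM r lam C w ≤ energy Ω Q s p pM r lam C u := by
  have hR0 : 0 < R := one_pos.trans S.R1
  have hRi : 0 < 1 / R := by positivity
  let K : Set (Euc N → ℝ) := {g | Measurable g ∧ (∀ x, 0 ≤ g x) ∧ ∀ x, x ∉ Ω → g x = 0}
  -- Minimisation takes place in the variable `g = w ^ R`.
  let E : (Euc N → ℝ) → ℝ≥0∞ := fun g => energy Ω Q s p pM r lam C (fun x => g x ^ (1 / R))
  have hfin : ⨅ g ∈ K, E g ≠ ⊤ := by
    have h0 : (fun _ => 0) ∈ K := ⟨measurable_const, fun _ => le_rfl, fun _ _ => rfl⟩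
    refine ((iInf₂_le (fun _ => 0) h0).trans_lt ?_).ne
    simp only [E, Real.zero_rpow hRi.ne']
    rw [S.energy_zero]
    exact S.lintegral_const_lt_top C
  have : IsFiniteMeasure (volume.restrict Ω) := ⟨by simpa using S.fin⟩
  obtain ⟨f, hfK, hfE, hflim⟩ := exists_minimizing_seq (μ := volume.restrict Ω) (K := K) (E := E)
    (fun g hg => hg.1) (fun g hg => hg.2.1) hfin
    (fun g hg h hh => ⟨(hg.1.add hh.1).div_const 2,
      fun x => by linarith [hg.2.1 x, hh.2.1 x],
      fun x hx => by simp [hg.2.2 x hx, hh.2.2 x hx]⟩)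
    (fun g hg h hh c hgc hhc => S.energy_midpoint hg.1 hh.1 hg.2.1 hh.2.1 hgc hhc)
  set m := ⨅ g ∈ K, E g with hm
  let v : ℕ → Euc N → ℝ := fun n x => f n x ^ (1 / R)
  have hvm : ∀ n, Measurable (v n) := fun n => (hfK n).1.pow_const _
  have hFatou : ∫⁻ x in Ω, liminf (fun n => ENNReal.ofReal (potInt pM r lam C x (v n x))) atTop
      ≤ m := by
    refine (lintegral_liminf_le' fun n => (S.aemeasurable_potInt (hvm n)).ennreal_ofReal).trans ?_
    rw [← hfE.liminf_eq]
    exact liminf_le_liminf (Eventually.of_forall fun n => le_add_self)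
  have hmeas : AEMeasurable
      (fun x => liminf (fun n => ENNReal.ofReal (potInt pM r lam C x (v n x))) atTop)
      (volume.restrict Ω) := by
    simp only [liminf_eq_iSup_iInf_of_nat]
    exact AEMeasurable.iSup fun n => AEMeasurable.biInf _ (Set.to_countable _)
      fun k _ => (S.aemeasurable_potInt (hvm k)).ennreal_ofReal
  have hlt : ∀ᵐ x ∂(volume.restrict Ω),
      liminf (fun n => ENNReal.ofReal (potInt pM r lam C x (v n x))) atTop < ⊤ :=
    ae_lt_top' hmeas (hFatou.trans_lt (lt_top_iff_ne_top.2 hfin)).ne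
  have hlim : ∀ᵐ x ∂(volume.restrict Ω), ∃ l, Tendsto (fun n => v n x) atTop (𝓝 l) := by
    filter_upwards [hlt, hflim, S.aeΩ (fun x hx => hx)] with x hx hl hxΩ
    obtain ⟨l, hl⟩ := hl
    have hl0 : 0 ≤ l := ge_of_tendsto' hl fun n => Real.exp_nonneg _
    rcases hl0.eq_or_lt with rfl | hlpos
    · -- Here `f n x → ∞`, and the coercive energy density would blow up.
      exfalso
      refine hx.ne (Tendsto.liminf_eq ?_)
      have h1 : Tendsto (fun n => -(f n x) / 2) atTop atBot :=
        Real.tendsto_exp_comp_nhds_zero.1 hl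
      have h2 : Tendsto (fun n => f n x) atTop atTop := by
        have h3 := (tendsto_neg_atBot_atTop.comp h1).const_mul_atTop (show (0:ℝ) < 2 by norm_num)
        refine h3.congr fun n => ?_
        simp only [Function.comp]; ring
      have h4 : Tendsto (fun n => v n x) atTop atTop := (tendsto_rpow_atTop hRi).comp h2
      have hpM := S.pM1 hxΩ
      have h5 : Tendsto (fun n => |v n x| ^ pM x / pM x / 2) atTop atTop :=
        (((tendsto_rpow_atTop (by linarith)).comp
          (tendsto_abs_atTop_atTop.comp h4)).atTop_div_const (by linarith)).atTop_div_const
            (by norm_num)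
      exact ENNReal.tendsto_ofReal_atTop.comp
        (tendsto_atTop_mono (fun n => S.half_le_potInt hxΩ _) h5)
    · have h1 := ((Real.continuousAt_log hlpos.ne').tendsto.comp hl).const_mul (-2)
      have h2 : Tendsto (fun n => f n x) atTop (𝓝 (-2 * Real.log l)) := by
        refine h1.congr fun n => ?_
        simp only [Function.comp, Real.log_exp]; ring
      exact ⟨_, h2.rpow_const (Or.inr hRi.le)⟩
  obtain ⟨w₀, hw₀m, hw₀⟩ := measurable_limit_of_tendsto_metrizable_ae
    (fun n => (hvm n).aemeasurable) hlim
  have hle : energy Ω Q s p pM r lam C (Ω.indicator w₀) ≤ m := by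
    rw [← hfE.liminf_eq]
    refine S.energy_le_liminf hvm ?_
    filter_upwards [(ae_restrict_iff' S.mΩ).1 hw₀] with x hx
    by_cases hxΩ : x ∈ Ω
    · rw [Set.indicator_of_mem hxΩ]; exact hx hxΩ
    · rw [Set.indicator_of_notMem hxΩ]
      simp only [(hfK _).2.2 x hxΩ, Real.zero_rpow hRi.ne']
      exact tendsto_const_nhds
  refine ⟨Ω.indicator w₀, hw₀m.indicator S.mΩ, fun x hx => Set.indicator_of_notMem hx _,
    hle.trans_lt (lt_top_iff_ne_top.2 hfin), fun u hu hu0 => ?_⟩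
  -- Replacing `u` by `|u|` does not raise the energy and brings it to the form `g ^ (1 / R)`.
  let g : Euc N → ℝ := Ω.indicator fun x => |u x| ^ R
  have hgK : g ∈ K := by
    refine ⟨((continuous_abs.measurable.comp hu).pow_const R).indicator S.mΩ, fun x => ?_,
      fun x hx => Set.indicator_of_notMem hx _⟩
    exact Set.indicator_nonneg (fun x _ => Real.rpow_nonneg (abs_nonneg _) _) x
  calc energy Ω Q s p pM r lam C (Ω.indicator w₀) ≤ m := hle
    _ ≤ E g := iInf₂_le _ hgK
    _ = energy Ω Q s p pM r lam C (fun x => |u x|) := by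
        refine energy_congr ?_
        filter_upwards [hu0] with x hx
        by_cases hxΩ : x ∈ Ω
        · simp only [g, Set.indicator_of_mem hxΩ]
          rw [← Real.rpow_mul (abs_nonneg _), mul_one_div_cancel hR0.ne', Real.rpow_one]
        · simp only [g, Set.indicator_of_notMem hxΩ, hx hxΩ, abs_zero, Real.zero_rpow hRi.ne']
    _ ≤ energy Ω Q s p pM r lam C u := S.energy_abs_le u

/-! ### The Euler-Lagrange equation -/

/-- Since the exponents are bounded, membership in the space amounts to finiteness of all
modulars. -/
lemma memW_iff (S : Setting Ω Q s p pM r P M R lam C) (w : Euc N → ℝ) :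
    memW Ω Q s p pM w ↔ Measurable w ∧
      Integrable (fun x => |w x| ^ pM x) (volume.restrict Ω) ∧
      ∀ i, Integrable (fun z : Euc N × Euc N =>
        |w z.1 - w z.2| ^ p i z * (‖z.1 - z.2‖ ^ (s * p i z + N))⁻¹) (volume.restrict Q) := by
  unfold memW
  refine and_congr_right fun hw => and_congr ?_ (forall_congr' fun i => ?_)
  · have h : AEMeasurable (fun x => |w x|) (volume.restrict Ω) :=
      continuous_abs.measurable.comp_aemeasurable hw.aemeasurable
    rw [Integrable, and_iff_right (h.pow S.mpM).aestronglyMeasurable,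
      hasFiniteIntegral_iff_ofReal (Eventually.of_forall fun x =>
        Real.rpow_nonneg (abs_nonneg _) _)]
  · have hmeas : AEStronglyMeasurable (fun z : Euc N × Euc N =>
        |w z.1 - w z.2| ^ p i z * (‖z.1 - z.2‖ ^ (s * p i z + N))⁻¹) (volume.restrict Q) :=
      (((continuous_abs.measurable.comp_aemeasurable
        (aemeasurable_diff hw)).pow (S.mp i)).mul (S.aemeasurable_kernel i).inv).aestronglyMeasurable
    rw [Integrable, and_iff_right hmeas,
      hasFiniteIntegral_iff_ofReal (Eventually.of_forall fun x => by positivity)]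
    constructor
    · rintro ⟨ν, hν, h⟩
      refine lt_of_le_of_lt ?_ (ENNReal.mul_lt_top (ENNReal.ofReal_lt_top (r := (max 1 ν) ^ M)) h)
      rw [← lintegral_const_mul' _ _ ENNReal.ofReal_ne_top]
      refine lintegral_mono_ae (S.aeQ fun z hz => ?_)
      rw [← ENNReal.ofReal_mul (by positivity)]
      refine ENNReal.ofReal_le_ofReal ?_
      have hp := S.p1 i hz
      have h1 : ν ^ p i z ≤ (max 1 ν) ^ M :=
        (Real.rpow_le_rpow hν.le (le_max_right 1 ν) (by linarith)).trans
          (Real.rpow_le_rpow_of_exponent_le (le_max_left _ _) (S.hp i z hz).2)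
      have h2 : 0 < ν ^ p i z := Real.rpow_pos_of_pos hν _
      have h3 : 0 ≤ |w z.1 - w z.2| ^ p i z * (‖z.1 - z.2‖ ^ (s * p i z + N))⁻¹ := by positivity
      calc |w z.1 - w z.2| ^ p i z * (‖z.1 - z.2‖ ^ (s * p i z + N))⁻¹
          = ν ^ p i z * ((ν ^ p i z)⁻¹ *
            (|w z.1 - w z.2| ^ p i z * (‖z.1 - z.2‖ ^ (s * p i z + N))⁻¹)) := by
            rw [mul_inv_cancel_left₀ h2.ne']
        _ ≤ (max 1 ν) ^ M * ((ν ^ p i z)⁻¹ *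
            (|w z.1 - w z.2| ^ p i z * (‖z.1 - z.2‖ ^ (s * p i z + N))⁻¹)) := by gcongr
        _ = _ := by rw [div_eq_mul_inv, mul_inv]; ring
    · intro h
      refine ⟨1, one_pos, ?_⟩
      simpa only [Real.one_rpow, one_mul, div_eq_mul_inv] using h

lemma memW_of_energy (S : Setting Ω Q s p pM r P M R lam C) {w : Euc N → ℝ} (hw : Measurable w)
    (h : energy Ω Q s p pM r lam C w < ⊤) : memW Ω Q s p pM w := by
  unfold energy at h
  obtain ⟨h1, h2⟩ := ENNReal.add_lt_top.1 h
  rw [ENNReal.sum_lt_top] at h1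
  refine ⟨hw, ?_, fun i => ⟨1, one_pos, ?_⟩⟩
  · refine lt_of_le_of_lt ?_ (ENNReal.mul_lt_top (ENNReal.ofReal_lt_top (r := 2 * M)) h2)
    rw [← lintegral_const_mul' _ _ ENNReal.ofReal_ne_top]
    refine lintegral_mono_ae (S.aeΩ fun x hx => ?_)
    have hpM := S.hpM x hx
    have hpM1 := S.pM1 hx
    rw [← ENNReal.ofReal_mul (by linarith)]
    refine ENNReal.ofReal_le_ofReal ?_
    have h3 := S.half_le_potInt hx (w x)
    have h4 := S.potInt_nonneg hx (w x)
    rw [div_div, div_le_iff₀ (by linarith)] at h3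
    calc _ ≤ _ := h3
      _ ≤ potInt pM r lam C x (w x) * (M * 2) := by gcongr; exact hpM.2
      _ = _ := by ring
  · refine lt_of_le_of_lt ?_ (ENNReal.mul_lt_top (ENNReal.ofReal_lt_top (r := M))
      (h1 i (Finset.mem_univ i)))
    rw [← lintegral_const_mul' _ _ ENNReal.ofReal_ne_top]
    refine lintegral_mono_ae (S.aeQ fun z hz => ?_)
    have hp := S.hp i z hz
    have hp1 := S.p1 i hz
    rw [← ENNReal.ofReal_mul (by linarith)]
    refine ENNReal.ofReal_le_ofReal ?_
    have h4 := S.gagInt_nonneg i w hz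
    rw [Real.one_rpow, one_mul]
    calc |w z.1 - w z.2| ^ p i z / ‖z.1 - z.2‖ ^ (s * p i z + N)
        = p i z * gagInt s (p i) w z := by
          unfold gagInt; rw [mul_div_cancel₀ _ (by linarith)]
      _ ≤ _ := by gcongr; exact hp.2

lemma integrable_r (S : Setting Ω Q s p pM r P M R lam C) {w : Euc N → ℝ}
    (hw : memW Ω Q s p pM w) : Integrable (fun x => |w x| ^ r x) (volume.restrict Ω) := by
  obtain ⟨hm, hi, -⟩ := (S.memW_iff w).1 hw
  have : IsFiniteMeasure (volume.restrict Ω) := ⟨by simpa using S.fin⟩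
  have h : AEMeasurable (fun x => |w x|) (volume.restrict Ω) :=
    continuous_abs.measurable.comp_aemeasurable hm.aemeasurable
  refine ((integrable_const (1:ℝ)).add hi).mono' (h.pow S.mr).aestronglyMeasurable
    (S.aeΩ fun x hx => ?_)
  have hr := S.hr x hx
  rw [Real.norm_of_nonneg (by positivity), Pi.add_apply]
  have h0 : 0 ≤ |w x| ^ pM x := by positivity
  rcases le_total |w x| 1 with h1 | h1
  · have := Real.rpow_le_one (abs_nonneg (w x)) h1 (show 0 ≤ r x by linarith)
    linarith
  · have := Real.rpow_le_rpow_of_exponent_le h1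
      (show r x ≤ pM x by linarith [(S.hpM x hx).1, S.RP])
    linarith

lemma integrable_gagInt (S : Setting Ω Q s p pM r P M R lam C) {w : Euc N → ℝ}
    (hw : memW Ω Q s p pM w) (i : Fin N) :
    Integrable (gagInt s (p i) w) (volume.restrict Q) := by
  obtain ⟨hm, -, hi⟩ := (S.memW_iff w).1 hw
  refine (hi i).mono' (S.aemeasurable_gagInt i hm).aestronglyMeasurable (S.aeQ fun z hz => ?_)
  rw [Real.norm_of_nonneg (S.gagInt_nonneg i w hz), ← div_eq_mul_inv]
  exact div_le_self (by positivity) (S.p1 i hz).le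

lemma integrable_div {q u : Euc N → ℝ} (S : Setting Ω Q s p pM r P M R lam C)
    (hq : ∀ x ∈ Ω, 1 < q x) (hqm : AEMeasurable q (volume.restrict Ω))
    (h : Integrable u (volume.restrict Ω)) :
    Integrable (fun x => u x / q x) (volume.restrict Ω) := by
  refine h.mono (h.aemeasurable.div hqm).aestronglyMeasurable (S.aeΩ fun x hx => ?_)
  rw [norm_div]
  refine div_le_self (norm_nonneg _) ?_
  rw [Real.norm_of_nonneg (by linarith [hq x hx])]
  exact (hq x hx).le

/-- On the function space the energy is, up to the additive constant, the functional `Jfun`. -/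
lemma energy_eq (S : Setting Ω Q s p pM r P M R lam C) {w : Euc N → ℝ}
    (hw : memW Ω Q s p pM w) :
    0 ≤ Jfun Ω Q s p pM r lam w + C * volume.real Ω ∧
    energy Ω Q s p pM r lam C w =
      ENNReal.ofReal (Jfun Ω Q s p pM r lam w + C * volume.real Ω) := by
  have : IsFiniteMeasure (volume.restrict Ω) := ⟨by simpa using S.fin⟩
  have h1 := S.integrable_div (fun x hx => S.pM1 hx) S.mpM ((S.memW_iff w).1 hw).2.1
  have h2 := S.integrable_div (fun x hx => (S.hr x hx).1) S.mr (S.integrable_r hw)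
  have h12 : Integrable (fun x => |w x| ^ pM x / pM x - lam * (|w x| ^ r x / r x))
    (volume.restrict Ω) := h1.sub (h2.const_mul lam)
  have hpot : Integrable (fun x => potInt pM r lam C x (w x)) (volume.restrict Ω) :=
    h12.add (integrable_const C)
  have hpot0 : 0 ≤ᵐ[volume.restrict Ω] fun x => potInt pM r lam C x (w x) :=
    S.aeΩ fun x hx => S.potInt_nonneg hx _
  have hpotI : ∫ x in Ω, potInt pM r lam C x (w x) = (∫ x in Ω, |w x| ^ pM x / pM x) -
      lam * (∫ x in Ω, |w x| ^ r x / r x) + C * volume.real Ω := by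
    unfold potInt
    rw [integral_add h12 (integrable_const C), integral_sub h1 (h2.const_mul lam),
      integral_const_mul, setIntegral_const, smul_eq_mul, mul_comm C]
  have hJ : Jfun Ω Q s p pM r lam w + C * volume.real Ω =
      (∑ i, ∫ z in Q, gagInt s (p i) w z) + ∫ x in Ω, potInt pM r lam C x (w x) := by
    rw [hpotI]; unfold Jfun gagInt; ring
  have hg0 : ∀ i, 0 ≤ᵐ[volume.restrict Q] gagInt s (p i) w := fun i =>
    S.aeQ fun z hz => S.gagInt_nonneg i w hz
  have hs0 : ∀ i, 0 ≤ ∫ z in Q, gagInt s (p i) w z := fun i => integral_nonneg_of_ae (hg0 i)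
  rw [hJ]
  refine ⟨add_nonneg (Finset.sum_nonneg fun i _ => hs0 i) (integral_nonneg_of_ae hpot0), ?_⟩
  rw [ENNReal.ofReal_add (Finset.sum_nonneg fun i _ => hs0 i) (integral_nonneg_of_ae hpot0),
    ENNReal.ofReal_sum_of_nonneg fun i _ => hs0 i,
    ofReal_integral_eq_lintegral_ofReal hpot hpot0]
  unfold energy
  congr 1
  exact Finset.sum_congr rfl fun i _ =>
    (ofReal_integral_eq_lintegral_ofReal (S.integrable_gagInt hw i) (hg0 i)).symm

lemma memW_add_smul (S : Setting Ω Q s p pM r P M R lam C) {w φ : Euc N → ℝ}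
    (hw : memW Ω Q s p pM w) (hφ : memW Ω Q s p pM φ) (t : ℝ) :
    memW Ω Q s p pM (fun x => w x + t * φ x) := by
  obtain ⟨hwm, hw1, hw2⟩ := (S.memW_iff w).1 hw
  obtain ⟨hφm, hφ1, hφ2⟩ := (S.memW_iff φ).1 hφ
  refine (S.memW_iff _).2 ⟨hwm.add (hφm.const_mul t), ?_, fun i => ?_⟩
  · have := integrable_modular_add (k := fun _ => 1) (M := M) aemeasurable_const S.mpM
      hwm.aemeasurable hφm.aemeasurable (Eventually.of_forall fun _ => zero_le_one)
      (S.aeΩ fun x hx => ⟨S.pM1 hx, (S.hpM x hx).2⟩) (by simpa using hw1) (by simpa using hφ1) t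
    simpa using this
  · have := integrable_modular_add (M := M) (S.aemeasurable_kernel i).inv (S.mp i)
      (aemeasurable_diff hwm) (aemeasurable_diff hφm)
      (Eventually.of_forall fun z => by simp only [Pi.inv_apply]; positivity)
      (S.aeQ fun z hz => ⟨S.p1 i hz, (S.hp i z hz).2⟩) (hw2 i) (hφ2 i) t
    refine this.congr (Eventually.of_forall fun z => ?_)
    simp only [Pi.inv_apply]
    congr 3; ring

/-- The functional `Jfun` is Gâteaux differentiable on the function space, with derivative
`Jderiv`. -/
lemma hasDerivAt_Jfun (S : Setting Ω Q s p pM r P M R lam C) {w φ : Euc N → ℝ}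
    (hw : memW Ω Q s p pM w) (hφ : memW Ω Q s p pM φ) :
    HasDerivAt (fun t : ℝ => Jfun Ω Q s p pM r lam (fun x => w x + t * φ x))
      (Jderiv Ω Q s p pM r lam w φ) 0 := by
  obtain ⟨hwm, hw1, hw2⟩ := (S.memW_iff w).1 hw
  obtain ⟨hφm, hφ1, hφ2⟩ := (S.memW_iff φ).1 hφ
  have hw3 := S.integrable_r hw
  have hφ3 := S.integrable_r hφ
  unfold Jfun Jderiv
  refine HasDerivAt.sub (HasDerivAt.add (HasDerivAt.fun_sum fun i _ => ?_) ?_)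
    (HasDerivAt.const_mul lam ?_)
  · have := hasDerivAt_modular (M := M) (S.aemeasurable_kernel i).inv (S.mp i)
      (aemeasurable_diff hwm) (aemeasurable_diff hφm)
      (Eventually.of_forall fun z => by simp only [Pi.inv_apply]; positivity)
      (S.aeQ fun z hz => ⟨S.p1 i hz, (S.hp i z hz).2⟩) (hw2 i) (hφ2 i)
    refine (this.congr_of_eventuallyEq (Eventually.of_forall fun t => ?_)).congr_deriv ?_
    · refine integral_congr_ae (Eventually.of_forall fun z => ?_)
      simp only [Pi.inv_apply]
      rw [div_eq_mul_inv (_ ^ _) (‖_‖ ^ _)]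
      congr 4; ring
    · refine integral_congr_ae (Eventually.of_forall fun z => ?_)
      simp only [Pi.inv_apply, div_eq_mul_inv]
  · have := hasDerivAt_modular (k := fun _ => 1) (M := M) aemeasurable_const S.mpM
      hwm.aemeasurable hφm.aemeasurable (Eventually.of_forall fun _ => zero_le_one)
      (S.aeΩ fun x hx => ⟨S.pM1 hx, (S.hpM x hx).2⟩) (by simpa using hw1) (by simpa using hφ1)
    simpa using this
  · have := hasDerivAt_modular (k := fun _ => 1) (M := R) aemeasurable_const S.mr
      hwm.aemeasurable hφm.aemeasurable (Eventually.of_forall fun _ => zero_le_one)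
      (S.aeΩ fun x hx => S.hr x hx) (by simpa using hw3) (by simpa using hφ3)
    simpa using this

/-- A minimiser of the energy satisfies the Euler-Lagrange equation. -/
lemma Jderiv_eq_zero (S : Setting Ω Q s p pM r P M R lam C) {w φ : Euc N → ℝ}
    (hw : memX0 Ω Q s p pM w) (hφ : memX0 Ω Q s p pM φ)
    (hmin : ∀ u : Euc N → ℝ, Measurable u → (∀ᵐ x, x ∉ Ω → u x = 0) →
        energy Ω Q s p pM r lam C w ≤ energy Ω Q s p pM r lam C u) :
    Jderiv Ω Q s p pM r lam w φ = 0 := by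
  refine IsLocalMin.hasDerivAt_eq_zero (Eventually.of_forall fun t => ?_)
    (S.hasDerivAt_Jfun hw.1 hφ.1)
  have ht := S.memW_add_smul hw.1 hφ.1 t
  have h := hmin _ ht.1 (by
    filter_upwards [hw.2, hφ.2] with x h1 h2 hx
    simp [h1 hx, h2 hx])
  rw [(S.energy_eq hw.1).2, (S.energy_eq ht).2,
    ENNReal.ofReal_le_ofReal_iff (S.energy_eq ht).1] at h
  simpa using h

end Setting

/-! ### Nontriviality -/

/-- Radial profile dominating `min 1 ρ ^ q / ρ ^ (s * q + N)` for every exponent `q ≥ 1`. -/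
def radial (N : ℕ) (s ρ : ℝ) : ℝ := if ρ ≤ 1 then ρ ^ (1 - s - N) else ρ ^ (-s - N)

lemma measurable_radial (N : ℕ) (s : ℝ) : Measurable (radial N s) :=
  Measurable.ite measurableSet_Iic (measurable_id.pow_const _) (measurable_id.pow_const _)

lemma min_rpow_div_le_radial {N : ℕ} {s ρ q a : ℝ} (s0 : 0 < s) (s1 : s < 1) (hρ : 0 ≤ ρ)
    (hq : 1 ≤ q) (ha : 0 ≤ a) (ha1 : a ≤ 1) (haρ : a ≤ ρ) :
    a ^ q / ρ ^ (s * q + N) ≤ radial N s ρ := by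
  unfold radial
  rcases hρ.eq_or_lt with rfl | hρ
  · have : a = 0 := le_antisymm haρ ha
    subst this
    rw [Real.zero_rpow (by linarith), zero_div]
    split_ifs
    all_goals positivity
  split_ifs with h
  · calc a ^ q / ρ ^ (s * q + N) ≤ ρ ^ q / ρ ^ (s * q + N) := by gcongr
      _ = ρ ^ (q - (s * q + N)) := (Real.rpow_sub hρ _ _).symm
      _ ≤ ρ ^ (1 - s - N) := Real.rpow_le_rpow_of_exponent_ge hρ h (by nlinarith)
  · calc a ^ q / ρ ^ (s * q + N) ≤ 1 / ρ ^ (s * q + N) := by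
          gcongr; exact Real.rpow_le_one ha ha1 (by linarith)
      _ = ρ ^ (-(s * q + N)) := by rw [Real.rpow_neg hρ.le, one_div]
      _ ≤ ρ ^ (-s - N) := Real.rpow_le_rpow_of_exponent_le (by linarith) (by nlinarith)

lemma lintegral_radial_lt_top {N : ℕ} {s : ℝ} (hN : 2 ≤ N) (s0 : 0 < s) (s1 : s < 1) :
    ∫⁻ h : Euc N, ENNReal.ofReal (radial N s ‖h‖) < ⊤ := by
  have : Nonempty (Fin N) := ⟨⟨0, by omega⟩⟩
  have key : Integrable (fun h : Euc N => radial N s ‖h‖) volume := by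
    rw [integrable_fun_norm_addHaar volume (f := radial N s), finrank_euclideanSpace_fin,
      ← Set.Ioc_union_Ioi_eq_Ioi zero_le_one, integrableOn_union]
    constructor
    · have h := (intervalIntegral.intervalIntegrable_rpow' (a := 0) (b := 1)
        (show -1 < -s by linarith)).1
      refine h.congr_fun (fun y hy => ?_) measurableSet_Ioc
      simp only [radial, if_pos hy.2, smul_eq_mul]
      rw [← Real.rpow_natCast, ← Real.rpow_add hy.1, Nat.cast_sub (by omega)]
      congr 1; push_cast; ring
    · refine (integrableOn_Ioi_rpow_of_lt (show -s - 1 < -1 by linarith) one_pos).congr_fun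
        (fun y hy => ?_) measurableSet_Ioi
      have hy0 : (0:ℝ) < y := one_pos.trans hy
      simp only [radial, if_neg (not_le.2 (Set.mem_Ioi.1 hy)), smul_eq_mul]
      rw [← Real.rpow_natCast, ← Real.rpow_add hy0, Nat.cast_sub (by omega)]
      congr 1; push_cast; ring
  exact key.lintegral_lt_top

namespace Setting

variable {N : ℕ} {Ω : Set (Euc N)} {Q : Set (Euc N × Euc N)} {s : ℝ}
  {p : Fin N → Euc N × Euc N → ℝ} {pM r : Euc N → ℝ} {P M R lam C : ℝ}

/-- Lipschitz functions with values in `[0, 1]` belong to the space: by Tonelli, the Gagliardo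
integral over pairs meeting `Ω` is at most `2 * volume Ω` times the mass of the radial profile. -/
lemma memW_of_lipschitz (S : Setting Ω Q s p pM r P M R lam C) (hN : 2 ≤ N)
    (hQ : Q = (Ωᶜ ×ˢ Ωᶜ)ᶜ) {φ : Euc N → ℝ} (hφ : Measurable φ) (h01 : ∀ x, 0 ≤ φ x ∧ φ x ≤ 1)
    (hL : ∀ x y, |φ x - φ y| ≤ ‖x - y‖) : memW Ω Q s p pM φ := by
  refine ⟨hφ, ?_, fun i => ⟨1, one_pos, ?_⟩⟩
  · refine lt_of_le_of_lt (lintegral_mono_ae (S.aeΩ fun x hx => ?_)) (S.lintegral_const_lt_top 1)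
    refine ENNReal.ofReal_le_ofReal (Real.rpow_le_one (abs_nonneg _) ?_ (by linarith [S.pM1 hx]))
    rw [abs_of_nonneg (h01 x).1]; exact (h01 x).2
  let k : Euc N → ℝ≥0∞ := fun h => ENNReal.ofReal (radial N s ‖h‖)
  have hk : Measurable k := ((measurable_radial N s).comp measurable_norm).ennreal_ofReal
  have hki : ∫⁻ h, k h < ⊤ := lintegral_radial_lt_top hN S.s0 S.s1
  let ind : Euc N → ℝ≥0∞ := Ω.indicator fun _ => 1
  have hind : Measurable ind := measurable_const.indicator S.mΩ
  have hindt : ∀ x, ind x ≠ ⊤ := fun x => by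
    by_cases hx : x ∈ Ω <;> simp [ind, hx]
  have hindi : ∫⁻ x, ind x = volume Ω := by
    simp only [ind, lintegral_indicator S.mΩ, setLIntegral_const, one_mul]
  have hF : Measurable fun z : Euc N × Euc N => k (z.1 - z.2) :=
    hk.comp (measurable_fst.sub measurable_snd)
  have hm1 : Measurable fun z : Euc N × Euc N => ind z.1 * k (z.1 - z.2) :=
    (hind.comp measurable_fst).mul hF
  have hm2 : Measurable fun z : Euc N × Euc N => ind z.2 * k (z.1 - z.2) :=
    (hind.comp measurable_snd).mul hF
  have h1 : ∫⁻ z : Euc N × Euc N, ind z.1 * k (z.1 - z.2) = volume Ω * ∫⁻ h, k h := by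
    rw [Measure.volume_eq_prod, lintegral_prod _ hm1.aemeasurable]
    simp only [lintegral_const_mul' _ _ (hindt _), lintegral_sub_left_eq_self]
    rw [lintegral_mul_const _ hind, hindi]
  have h2 : ∫⁻ z : Euc N × Euc N, ind z.2 * k (z.1 - z.2) = volume Ω * ∫⁻ h, k h := by
    rw [Measure.volume_eq_prod, lintegral_prod_symm _ hm2.aemeasurable]
    simp only [lintegral_const_mul' _ _ (hindt _), lintegral_sub_right_eq_self]
    rw [lintegral_mul_const _ hind, hindi]
  have hfin : volume Ω * ∫⁻ h, k h < ⊤ := ENNReal.mul_lt_top S.fin hki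
  calc _ ≤ ∫⁻ z : Euc N × Euc N in Q, (ind z.1 * k (z.1 - z.2) + ind z.2 * k (z.1 - z.2)) := by
        refine lintegral_mono_ae (S.aeQ fun z hz => ?_)
        have hle : ENNReal.ofReal (|φ z.1 - φ z.2| ^ p i z /
            ((1:ℝ) ^ p i z * ‖z.1 - z.2‖ ^ (s * p i z + N))) ≤ k (z.1 - z.2) := by
          rw [Real.one_rpow, one_mul]
          refine ENNReal.ofReal_le_ofReal (min_rpow_div_le_radial S.s0 S.s1 (norm_nonneg _)
            (S.p1 i hz).le (abs_nonneg _) ?_ (hL _ _))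
          have := h01 z.1; have := h01 z.2
          rw [abs_le]; constructor <;> linarith
        have hz' : z.1 ∈ Ω ∨ z.2 ∈ Ω := by
          rw [hQ] at hz
          simp only [Set.mem_compl_iff, Set.mem_prod] at hz
          tauto
        rcases hz' with h | h
        · refine hle.trans (le_trans ?_ le_self_add)
          simp only [ind, Set.indicator_of_mem h, one_mul, le_refl]
        · refine hle.trans (le_trans ?_ le_add_self)
          simp only [ind, Set.indicator_of_mem h, one_mul, le_refl]
    _ ≤ ∫⁻ z : Euc N × Euc N, (ind z.1 * k (z.1 - z.2) + ind z.2 * k (z.1 - z.2)) :=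
        setLIntegral_le_lintegral _ _
    _ = volume Ω * (∫⁻ h, k h) + volume Ω * ∫⁻ h, k h := by rw [lintegral_add_left hm1, h1, h2]
    _ < ⊤ := ENNReal.add_lt_top.2 ⟨hfin, hfin⟩

/-- Along the ray `t ↦ t φ` the subcritical term, of order at least `t ^ R`, dominates the other
terms, of order at most `t ^ P`, as `t → 0`. -/
lemma exists_Jfun_neg (S : Setting Ω Q s p pM r P M R lam C) {φ : Euc N → ℝ}
    (hφ : memW Ω Q s p pM φ) (hpos : 0 < ∫ x in Ω, |φ x| ^ r x / r x) :
    ∃ t : ℝ, memW Ω Q s p pM (fun x => t * φ x) ∧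
      Jfun Ω Q s p pM r lam (fun x => t * φ x) < 0 := by
  have hzero : memW Ω Q s p pM (fun _ => 0) := by
    refine S.memW_of_energy measurable_const ?_
    rw [S.energy_zero]; exact S.lintegral_const_lt_top C
  have hmem : ∀ t : ℝ, memW Ω Q s p pM (fun x => t * φ x) := fun t => by
    simpa using S.memW_add_smul hzero hφ t
  set B := ∫ x in Ω, |φ x| ^ r x / r x
  set A := (∑ i, ∫ z in Q, gagInt s (p i) φ z) + ∫ x in Ω, |φ x| ^ pM x / pM x with hA
  have hbound : ∀ t : ℝ, 0 < t → t ≤ 1 →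
      Jfun Ω Q s p pM r lam (fun x => t * φ x) ≤ t ^ P * A - lam * (t ^ R * B) := by
    intro t ht ht1
    have hpow : ∀ {q a : ℝ}, P ≤ q → (|t * a|) ^ q ≤ t ^ P * |a| ^ q := fun {q a} hq => by
      rw [abs_mul, abs_of_pos ht, Real.mul_rpow ht.le (abs_nonneg _)]
      gcongr 1
      exact Real.rpow_le_rpow_of_exponent_ge ht ht1 hq
    have e1 : ∀ i, ∫ z in Q, gagInt s (p i) (fun x => t * φ x) z ≤
        t ^ P * ∫ z in Q, gagInt s (p i) φ z := fun i => by
      rw [← integral_const_mul]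
      refine integral_mono_ae (S.integrable_gagInt (hmem t) i)
        ((S.integrable_gagInt hφ i).const_mul _) (S.aeQ fun z hz => ?_)
      have hp1 := S.p1 i hz
      simp only [gagInt]
      rw [← mul_sub, ← mul_div_assoc, ← mul_div_assoc]
      gcongr
      exact hpow (S.hp i z hz).1
    have e2 : ∫ x in Ω, |t * φ x| ^ pM x / pM x ≤ t ^ P * ∫ x in Ω, |φ x| ^ pM x / pM x := by
      rw [← integral_const_mul]
      refine integral_mono_ae
        (S.integrable_div (fun x hx => S.pM1 hx) S.mpM ((S.memW_iff _).1 (hmem t)).2.1)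
        ((S.integrable_div (fun x hx => S.pM1 hx) S.mpM ((S.memW_iff _).1 hφ).2.1).const_mul _)
        (S.aeΩ fun x hx => ?_)
      have hp1 := S.pM1 hx
      simp only
      rw [← mul_div_assoc]
      gcongr
      exact hpow (S.hpM x hx).1
    have e3 : t ^ R * B ≤ ∫ x in Ω, |t * φ x| ^ r x / r x := by
      rw [← integral_const_mul]
      refine integral_mono_ae
        ((S.integrable_div (fun x hx => (S.hr x hx).1) S.mr (S.integrable_r hφ)).const_mul _)
        (S.integrable_div (fun x hx => (S.hr x hx).1) S.mr (S.integrable_r (hmem t)))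
        (S.aeΩ fun x hx => ?_)
      have hp1 := (S.hr x hx).1
      simp only
      rw [← mul_div_assoc, abs_mul, abs_of_pos ht, Real.mul_rpow ht.le (abs_nonneg _)]
      gcongr 2
      exact Real.rpow_le_rpow_of_exponent_ge ht ht1 (S.hr x hx).2
    have e4 := mul_le_mul_of_nonneg_left e3 S.lam0.le
    have e5 := Finset.sum_le_sum fun i (_ : i ∈ Finset.univ) => e1 i
    rw [← Finset.mul_sum] at e5
    have e6 : Jfun Ω Q s p pM r lam (fun x => t * φ x) =
        (∑ i, ∫ z in Q, gagInt s (p i) (fun x => t * φ x) z) +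
        (∫ x in Ω, |t * φ x| ^ pM x / pM x) - lam * ∫ x in Ω, |t * φ x| ^ r x / r x := rfl
    rw [e6, hA, mul_add]
    linarith
  have hlim : Tendsto (fun t : ℝ => t ^ (P - R) * A) (𝓝[>] 0) (𝓝 0) := by
    have h : Tendsto (fun t : ℝ => t ^ (P - R)) (𝓝 0) (𝓝 0) := by
      have := (Real.continuousAt_rpow_const 0 (P - R) (Or.inr (by linarith [S.RP]))).tendsto
      rwa [Real.zero_rpow (by linarith [S.RP])] at this
    simpa using (h.mono_left nhdsWithin_le_nhds).mul_const A
  have hlB : 0 < lam * B := mul_pos S.lam0 hpos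
  obtain ⟨t, ht, ht0, ht1⟩ := ((hlim.eventually_lt_const hlB).and
    (Ioc_mem_nhdsGT (zero_lt_one' ℝ))).exists
  refine ⟨t, hmem t, (hbound t ht0 ht1).trans_lt ?_⟩
  have h1 : t ^ P = t ^ R * t ^ (P - R) := by rw [← Real.rpow_add ht0]; congr 1; ring
  have h2 : 0 < t ^ R := Real.rpow_pos_of_pos ht0 _
  rw [h1]
  nlinarith

/-- The zero function does not minimise the energy. -/
lemma exists_energy_lt (S : Setting Ω Q s p pM r P M R lam C) (hN : 2 ≤ N) (hΩ : IsOpen Ω)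
    (hne : Ω.Nonempty) (hQ : Q = (Ωᶜ ×ˢ Ωᶜ)ᶜ) :
    ∃ u : Euc N → ℝ, Measurable u ∧ (∀ x, x ∉ Ω → u x = 0) ∧
      energy Ω Q s p pM r lam C u < energy Ω Q s p pM r lam C (fun _ => 0) := by
  obtain ⟨x₀, hx₀⟩ := hne
  obtain ⟨ε, hε, hball⟩ := Metric.isOpen_iff.1 hΩ x₀ hx₀
  let ρ := min ε 1
  have hρ : 0 < ρ := lt_min hε one_pos
  let φ : Euc N → ℝ := fun x => max 0 (ρ - ‖x - x₀‖)
  have hφm : Measurable φ := by fun_prop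
  have h01 : ∀ x, 0 ≤ φ x ∧ φ x ≤ 1 := fun x =>
    ⟨le_max_left _ _, max_le zero_le_one (by linarith [norm_nonneg (x - x₀), min_le_right ε 1])⟩
  have hL : ∀ x y, |φ x - φ y| ≤ ‖x - y‖ := fun x y => by
    refine (abs_max_sub_max_le_max _ _ _ _).trans (max_le (by simp) ?_)
    have h := abs_norm_sub_norm_le (y - x₀) (x - x₀)
    rw [sub_sub_sub_cancel_right, norm_sub_rev y x] at h
    rwa [show ρ - ‖x - x₀‖ - (ρ - ‖y - x₀‖) = ‖y - x₀‖ - ‖x - x₀‖ by ring]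
  have hoff : ∀ x, x ∉ Ω → φ x = 0 := fun x hx => by
    refine max_eq_left ?_
    by_contra! h
    refine hx (hball ?_)
    rw [Metric.mem_ball, dist_eq_norm]
    linarith [min_le_left ε 1]
  have hφ := S.memW_of_lipschitz hN hQ hφm h01 hL
  have hpos : 0 < ∫ x in Ω, |φ x| ^ r x / r x := by
    rw [integral_pos_iff_support_of_nonneg_ae (S.aeΩ fun x hx => by
      have := (S.hr x hx).1; simp only [Pi.zero_apply]; positivity)
      (S.integrable_div (fun x hx => (S.hr x hx).1) S.mr (S.integrable_r hφ))]
    refine (Metric.measure_ball_pos volume x₀ hρ).trans_le ?_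
    have hsub : Metric.ball x₀ ρ ⊆ Ω := (Metric.ball_subset_ball (min_le_left _ _)).trans hball
    rw [← Measure.restrict_eq_self volume hsub]
    refine measure_mono fun x hx => ?_
    have h1 := (S.hr x (hsub hx)).1
    rw [Metric.mem_ball, dist_eq_norm] at hx
    have h2 : 0 < φ x := lt_max_of_lt_right (by linarith)
    have h3 : 0 < |φ x| := abs_pos.2 h2.ne'
    exact (div_pos (Real.rpow_pos_of_pos h3 _) (by linarith)).ne'
  obtain ⟨t, htm, htJ⟩ := S.exists_Jfun_neg hφ hpos
  refine ⟨fun x => t * φ x, htm.1, fun x hx => by simp [hoff x hx], ?_⟩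
  obtain ⟨h1, h2⟩ := S.energy_eq htm
  have hE0 : energy Ω Q s p pM r lam C (fun _ => 0) = ENNReal.ofReal (C * volume.real Ω) := by
    rw [S.energy_zero, setLIntegral_const, ENNReal.ofReal_mul S.C0, ofReal_measureReal S.fin.ne]
  rw [h2, hE0, ENNReal.ofReal_lt_ofReal_iff (by linarith)]
  linarith

end Setting

/-! ### The weak solution -/

/-- existence of a nontrivial weak solution of the anisotropic nonlocal problem. -/
theorem existence_weak_solution
    {N : ℕ} (hN : 2 ≤ N) (Ω : Set (Euc N)) (hΩo : IsOpen Ω)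
    (hΩb : Bornology.IsBounded Ω) (s : ℝ) (hs : s ∈ Set.Ioo (0:ℝ) 1)
    (Q : Set (Euc N × Euc N)) (hQ : Q = (Ωᶜ ×ˢ Ωᶜ)ᶜ)
    (p : Fin N → Euc N × Euc N → ℝ)
    (hp_cont : ∀ i, ContinuousOn (p i) (closure Q))
    (hp_symm : ∀ i, ∀ z ∈ closure Q, p i z = p i (z.2, z.1))
    (hp_bounds : ∀ i, ∃ pm pp : ℝ, 1 < pm ∧
      ∀ z ∈ closure Q, pm ≤ p i z ∧ p i z ≤ pp)
    (pM : Euc N → ℝ) (hpM : ∀ x, pM x = ⨆ i, p i (x, x))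
    (Pm : ℝ) (hPm : IsGLB {y : ℝ | ∃ i : Fin N, ∃ z ∈ closure Q, p i z = y} Pm)
    (r : Euc N → ℝ) (hr_cont : ContinuousOn r (closure Ω))
    (hr : ∀ x ∈ closure Ω, 1 < r x ∧ r x < Pm)
    (hsp : ∀ i, ∀ z ∈ closure Q, s * p i z < N) :
    ∃ lamStar > (0:ℝ), ∀ lam ∈ Set.Ioo (0:ℝ) lamStar,
      ∃ w : Euc N → ℝ, memX0 Ω Q s p pM w ∧ ¬ (w =ᵐ[volume] (fun _ => (0:ℝ))) ∧
        ∀ φ : Euc N → ℝ, memX0 Ω Q s p pM φ →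
          (∑ i, ∫ z in Q, |w z.1 - w z.2| ^ (p i z - 2) * (w z.1 - w z.2) *
              (φ z.1 - φ z.2) / ‖z.1 - z.2‖ ^ (s * p i z + N)) +
            (∫ x in Ω, |w x| ^ (pM x - 2) * w x * φ x) =
          lam * ∫ x in Ω, |w x| ^ (r x - 2) * w x * φ x := by
  have hne : Ω.Nonempty := by
    -- For empty `Ω` the set of values of the exponents is empty and has no infimum in `ℝ`.
    by_contra h
    rw [Set.not_nonempty_iff_eq_empty] at h
    have hQe : Q = ∅ := by rw [hQ, h]; simp
    rw [hQe] at hPm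
    have hlb : Pm + 1 ∈ lowerBounds {y : ℝ | ∃ i : Fin N, ∃ z ∈ closure (∅ : Set (Euc N × Euc N)),
      p i z = y} := by
      rintro y ⟨i, z, hz, -⟩
      simp at hz
    linarith [hPm.2 hlb]
  have : Nonempty (Fin N) := ⟨⟨0, by omega⟩⟩
  have hQm : MeasurableSet Q := by
    rw [hQ]; exact (hΩo.measurableSet.compl.prod hΩo.measurableSet.compl).compl
  choose pm pp hpm hpmpp using hp_bounds
  -- Maximum with `Pm` gives `Pm ≤ M` without evaluating an exponent at a point.
  let M := max Pm (∑ i, |pp i|)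
  have hpP : ∀ i, ∀ z ∈ Q, Pm ≤ p i z ∧ p i z ≤ M := fun i z hz => by
    refine ⟨hPm.1 ⟨i, z, subset_closure hz, rfl⟩, le_max_of_le_right ?_⟩
    exact ((hpmpp i z (subset_closure hz)).2.trans (le_abs_self _)).trans
      (Finset.single_le_sum (f := fun i => |pp i|) (fun j _ => abs_nonneg _) (Finset.mem_univ i))
  have hdiag : ∀ x ∈ Ω, (x, x) ∈ Q := fun x hx => by
    rw [hQ]; simp [hx]
  obtain ⟨y₀, hy₀, hmax⟩ := hΩb.isCompact_closure.exists_isMaxOn hne.closure hr_cont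
  -- Coercivity holds for every positive `lam`, so any threshold works.
  refine ⟨1, one_pos, fun lam hlam => ?_⟩
  obtain ⟨hR1, hRP⟩ := hr y₀ hy₀
  have hM1 : 1 ≤ M := (hR1.trans hRP).le.trans (le_max_left _ _)
  obtain ⟨C, hC0, hC⟩ := exists_absorb hlam.1 hR1 hRP hM1
  have hpMb : ∀ x ∈ Ω, Pm ≤ pM x ∧ pM x ≤ M := fun x hx => by
    rw [hpM]
    exact ⟨(hpP _ _ (hdiag x hx)).1.trans (le_ciSup (f := fun i => p i (x, x))
      (Set.finite_range _).bddAbove (Classical.arbitrary _)),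
      ciSup_le fun i => (hpP i _ (hdiag x hx)).2⟩
  have hrb : ∀ x ∈ Ω, 1 < r x ∧ r x ≤ r y₀ := fun x hx =>
    ⟨(hr x (subset_closure hx)).1, hmax (subset_closure hx)⟩
  have S : Setting Ω Q s p pM r Pm M (r y₀) lam C :=
    { s0 := hs.1
      s1 := hs.2
      mΩ := hΩo.measurableSet
      fin := hΩb.measure_lt_top
      mQ := hQm
      mp := fun i => ((hp_cont i).mono subset_closure).aemeasurable hQm
      mpM := by
        rw [funext hpM]
        refine AEMeasurable.iSup fun i => ContinuousOn.aemeasurable ?_ hΩo.measurableSet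
        exact (hp_cont i).comp (by fun_prop) fun x hx => subset_closure (hdiag x hx)
      mr := (hr_cont.mono subset_closure).aemeasurable hΩo.measurableSet
      R1 := hR1
      RP := hRP
      PM := le_max_left _ _
      hp := hpP
      hpM := hpMb
      hr := hrb
      lam0 := hlam.1
      C0 := hC0
      absorb := fun x hx t ht => hC _ _ t (hrb x hx).1.le (hrb x hx).2 (hpMb x hx).1
        (hpMb x hx).2 ht }
  obtain ⟨w, hwm, hw0, hwfin, hmin⟩ := S.exists_minimizer
  obtain ⟨u, hum, hu0, hu⟩ := S.exists_energy_lt hN hΩo hne hQ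
  have hwX : memX0 Ω Q s p pM w :=
    ⟨S.memW_of_energy hwm hwfin, Eventually.of_forall hw0⟩
  refine ⟨w, hwX, fun h => ?_, fun φ hφ => ?_⟩
  · exact absurd (hmin u hum (Eventually.of_forall hu0))
      (not_le.2 (hu.trans_eq (energy_congr h).symm))
  · have h := S.Jderiv_eq_zero hwX hφ hmin
    unfold Jderiv at h
    linarith
end
end

section
/- Comparison of constant-exponent and variable-exponent Gagliardo seminorms: let Ω ⊆ ℝ^N be a bounded open set, 0 < t < s < 1, B ⊆ Ω an open subset, p : Ω̄ × Ω̄ → ℝ continuous and symmetric with 1 < p⁻ ≤ p(x,y) ≤ p⁺ < ∞, and let q̄ ∈ (1, ∞) be a constant with q̄ ≤ p(x,y) for all (x,y) ∈ B̄ × B̄. Then there exists C > 0 (depending on N, s, t, q̄, p, Ω, B) such that for every measurable w : Ω → ℝ, ( ∫∫_{B×B} |w(x)−w(y)|^{q̄}/|x−y|^{N+t·q̄} dx dy )^{1/q̄} ≤ C · [w]_{s,p(x,y)}(Ω), where [w]_{s,p(x,y)}(Ω) := inf{ν > 0 : ∫∫_{Ω×Ω} |w(x)−w(y)|^{p(x,y)}/(ν^{p(x,y)}|x−y|^{s·p(x,y)+N})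 dx dy ≤ 1}. -/
/-!
Let `ν` be admissible for the variable exponent seminorm, `r = ‖x - y‖`, `D` a bound for the
distances in `Ω`, and `a = |w x - w y| / (ν r ^ s)`. Since `a ^ qb ≤ 1 + a ^ p` for `qb ≤ p`,
`|w x - w y| ^ qb / r ^ (N + t qb) = ν ^ qb a ^ qb r ^ ((s - t) qb - N)`
`  ≤ ν ^ qb (r ^ ((s - t) qb - N) + D ^ ((s - t) qb) a ^ p r ^ (-N))`.
The kernel `r ^ ((s - t) qb - N)` has finite integral over bounded sets because `t < s`
(`lintegral_kernel_lt_top`), and `a ^ p r ^ (-N)` has integral at most `1` over `Ω × Ω` because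
`ν` is admissible. Hence the constant exponent seminorm is at most `C ν`, with `C` independent of
`ν` and `w`, and the infimum over `ν` gives the claim.
-/

open MeasureTheory ENNReal Filter Topology

noncomputable section

/-- The comparison of integrands off the diagonal, with `d = |w x - w y|` and `r = ‖x - y‖`. -/
lemma pointwise_bound {d r D ν q P s t n : ℝ} (hd : 0 ≤ d) (hr : 0 < r) (hrD : r ≤ D)
    (hν : 0 < ν) (hq : 0 < q) (hqP : q ≤ P) (hts : t < s) :
    d ^ q / r ^ (n + t * q) ≤
      ν ^ q * (r ^ ((s - t) * q - n) + D ^ ((s - t) * q) * (d ^ P / (ν ^ P * r ^ (s * P + n)))) := by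
  -- In terms of `a = d / (ν * r ^ s)`, both quotients are powers of `a` times powers of `r`.
  obtain ⟨a, ha, rfl⟩ : ∃ a : ℝ, 0 ≤ a ∧ d = a * (ν * r ^ s) :=
    ⟨d / (ν * r ^ s), by positivity, by field_simp⟩
  have haq : a ^ q ≤ 1 + a ^ P := by
    rcases le_total a 1 with h | h
    · have h1 := Real.rpow_le_one ha h hq.le
      have h2 := Real.rpow_nonneg ha P
      linarith
    · have h1 := Real.rpow_le_rpow_of_exponent_le h hqP
      linarith
  have e1 : (a * (ν * r ^ s)) ^ q / r ^ (n + t * q) =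
      ν ^ q * (a ^ q * r ^ ((s - t) * q - n)) := by
    rw [Real.mul_rpow ha (by positivity), Real.mul_rpow hν.le (by positivity), ← Real.rpow_mul hr.le,
      div_eq_mul_inv, ← Real.rpow_neg hr.le,
      show (s - t) * q - n = s * q + -(n + t * q) by ring, Real.rpow_add hr]
    ring
  have e2 : (a * (ν * r ^ s)) ^ P / (ν ^ P * r ^ (s * P + n)) = a ^ P * r ^ (-n) := by
    rw [Real.mul_rpow ha (by positivity), Real.mul_rpow hν.le (by positivity), ← Real.rpow_mul hr.le,
      Real.rpow_add hr, Real.rpow_neg hr.le]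
    field_simp
  rw [e1, e2]
  have h3 : r ^ ((s - t) * q) ≤ D ^ ((s - t) * q) :=
    Real.rpow_le_rpow hr.le hrD (by nlinarith)
  have e3 : r ^ ((s - t) * q - n) = r ^ ((s - t) * q) * r ^ (-n) := by
    rw [← Real.rpow_add hr, sub_eq_add_neg]
  refine mul_le_mul_of_nonneg_left ?_ (by positivity)
  calc a ^ q * r ^ ((s - t) * q - n) ≤ (1 + a ^ P) * r ^ ((s - t) * q - n) := by gcongr
    _ = r ^ ((s - t) * q - n) + r ^ ((s - t) * q) * (a ^ P * r ^ (-n)) := by rw [e3]; ring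
    _ ≤ _ := by gcongr

/-- For `0 < N`, in polar coordinates the integral is a multiple of the integral of `ρ ^ (α - 1)` over
`(0, D)`. -/
lemma integrableOn_norm_rpow {N : ℕ} {α D : ℝ} (hα : 0 < α) (hD : 0 < D) :
    IntegrableOn (fun v : Euc N => ‖v‖ ^ (α - N)) (Metric.ball 0 D) := by
  rcases Nat.eq_zero_or_pos N with rfl | hN
  · have : (fun v : Euc 0 => ‖v‖ ^ (α - (0 : ℕ))) = fun _ => 0 := by
      funext v
      rw [Subsingleton.elim v 0]
      simp [hα.ne']
    rw [this]
    exact integrableOn_zero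
  · have : Nonempty (Fin N) := ⟨⟨0, hN⟩⟩
    have : Nontrivial (Euc N) := inferInstance
    rw [integrableOn_fun_norm_addHaar volume (f := fun y : ℝ => y ^ (α - N))]
    have h := (intervalIntegral.integrableOn_Ioo_rpow_iff (s := α - 1) hD).2 (by linarith)
    refine h.congr_fun (fun y hy => ?_) measurableSet_Ioo
    have hN' : ((N - 1 : ℕ) : ℝ) = N - 1 := by
      rw [Nat.cast_sub hN, Nat.cast_one]
    simp only [finrank_euclideanSpace, Fintype.card_fin, smul_eq_mul]
    rw [← Real.rpow_natCast y (N - 1), ← Real.rpow_add hy.1, hN']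
    congr 1
    ring

lemma measurable_kernel {N : ℕ} (β : ℝ) :
    Measurable (fun z : Euc N × Euc N => ENNReal.ofReal (‖z.1 - z.2‖ ^ β)) := by
  fun_prop

/-- For fixed `x ∈ S` the translation `y ↦ x - y` maps `S` into the ball of radius `2 * R`, so the
inner integral is bounded by the integral over that ball, uniformly in `x`. -/
lemma lintegral_kernel_lt_top {N : ℕ} {α R : ℝ} (hα : 0 < α) (hR : 0 < R) {S : Set (Euc N)}
    (hS : MeasurableSet S) (hSR : S ⊆ Metric.ball 0 R) :
    ∫⁻ z in S ×ˢ S, ENNReal.ofReal (‖z.1 - z.2‖ ^ (α - N)) < ⊤ := by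
  have hI : ∫⁻ v in Metric.ball (0 : Euc N) (2 * R), ENNReal.ofReal (‖v‖ ^ (α - N)) < ⊤ :=
    (integrableOn_norm_rpow hα (by positivity)).lintegral_lt_top
  set I := ∫⁻ v in Metric.ball (0 : Euc N) (2 * R), ENNReal.ofReal (‖v‖ ^ (α - N)) with hIdef
  have hin : ∀ x ∈ S, ∫⁻ y in S, ENNReal.ofReal (‖x - y‖ ^ (α - N)) ≤ I := by
    intro x hx
    rw [← lintegral_indicator hS, hIdef, ← lintegral_indicator Metric.isOpen_ball.measurableSet,
      ← lintegral_sub_left_eq_self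
        ((Metric.ball (0 : Euc N) (2 * R)).indicator fun v => ENNReal.ofReal (‖v‖ ^ (α - N))) x]
    refine lintegral_mono fun y => ?_
    by_cases hy : y ∈ S
    · have h1 := mem_ball_zero_iff.1 (hSR hx)
      have h2 := mem_ball_zero_iff.1 (hSR hy)
      have h3 : x - y ∈ Metric.ball (0 : Euc N) (2 * R) :=
        mem_ball_zero_iff.2 (by linarith [norm_sub_le x y])
      rw [Set.indicator_of_mem hy, Set.indicator_of_mem h3]
    · rw [Set.indicator_of_notMem hy]
      exact zero_le
  rw [Measure.volume_eq_prod, ← Measure.prod_restrict]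
  refine (lintegral_prod_le _).trans_lt ?_
  calc ∫⁻ x in S, ∫⁻ y in S, ENNReal.ofReal (‖x - y‖ ^ (α - N)) ≤ ∫⁻ _ in S, I :=
        setLIntegral_mono' hS hin
    _ = I * volume S := by simp
    _ < ⊤ := ENNReal.mul_lt_top hI
        ((measure_mono hSR).trans_lt Metric.isBounded_ball.measure_lt_top)

/-- comparison of the constant-exponent Gagliardo seminorm on a subdomain with
the variable exponent Gagliardo seminorm. -/
theorem constant_exponent_seminorm_le_variable_exponent_seminorm
    {N : ℕ} (Ω : Set (Euc N)) (hΩo : IsOpen Ω) (hΩb : Bornology.IsBounded Ω)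
    (s t : ℝ) (ht : 0 < t) (hts : t < s) (hs1 : s < 1)
    (B : Set (Euc N)) (hBo : IsOpen B) (hBΩ : B ⊆ Ω)
    (p : Euc N × Euc N → ℝ)
    (hp_cont : ContinuousOn p (closure Ω ×ˢ closure Ω))
    (hp_symm : ∀ x ∈ closure Ω, ∀ y ∈ closure Ω, p (x, y) = p (y, x))
    (hp_bounds : ∃ pm pp : ℝ, 1 < pm ∧
      ∀ z ∈ closure Ω ×ˢ closure Ω, pm ≤ p z ∧ p z ≤ pp)
    (qb : ℝ) (hqb : 1 < qb)
    (hqble : ∀ z ∈ closure B ×ˢ closure B, qb ≤ p z) :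
    ∃ C > (0:ℝ), ∀ w : Euc N → ℝ, Measurable w →
      (∃ ν > (0:ℝ), (∫⁻ z in Ω ×ˢ Ω, ENNReal.ofReal
          (|w z.1 - w z.2| ^ p z / (ν ^ p z * ‖z.1 - z.2‖ ^ (s * p z + N)))) ≤ 1) →
      (∫⁻ z in B ×ˢ B, ENNReal.ofReal
          (|w z.1 - w z.2| ^ qb / ‖z.1 - z.2‖ ^ ((N : ℝ) + t * qb))) ^ (1 / qb) ≤
        ENNReal.ofReal (C * gagSemi (Ω ×ˢ Ω) s p w) := by
  obtain ⟨R, hR, hΩR⟩ := hΩb.subset_ball_lt 0 0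
  have hq0 : 0 < qb := by linarith
  have hα : 0 < (s - t) * qb := mul_pos (by linarith) hq0
  have hK := lintegral_kernel_lt_top hα hR hBo.measurableSet (hBΩ.trans hΩR)
  set K := ∫⁻ z in B ×ˢ B, ENNReal.ofReal (‖z.1 - z.2‖ ^ ((s - t) * qb - N)) with hKdef
  set M : ℝ := K.toReal + (2 * R) ^ ((s - t) * qb) with hM
  have hMpos : 0 < M := by positivity
  refine ⟨M ^ (1 / qb), by positivity, fun w _ hex => ?_⟩
  have hBB : MeasurableSet (B ×ˢ B) := hBo.measurableSet.prod hBo.measurableSet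
  have key : ∀ ν : ℝ, 0 < ν → (∫⁻ z in Ω ×ˢ Ω, ENNReal.ofReal
      (|w z.1 - w z.2| ^ p z / (ν ^ p z * ‖z.1 - z.2‖ ^ (s * p z + N)))) ≤ 1 →
      (∫⁻ z in B ×ˢ B, ENNReal.ofReal
          (|w z.1 - w z.2| ^ qb / ‖z.1 - z.2‖ ^ ((N : ℝ) + t * qb))) ^ (1 / qb) ≤
        ENNReal.ofReal (M ^ (1 / qb) * ν) := by
    intro ν hν hle
    have hint : ∫⁻ z in B ×ˢ B, ENNReal.ofReal
          (|w z.1 - w z.2| ^ qb / ‖z.1 - z.2‖ ^ ((N : ℝ) + t * qb)) ≤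
        ENNReal.ofReal (ν ^ qb * M) := by
      calc _ ≤ ∫⁻ z in B ×ˢ B, ENNReal.ofReal (ν ^ qb) *
            (ENNReal.ofReal (‖z.1 - z.2‖ ^ ((s - t) * qb - N)) +
              ENNReal.ofReal ((2 * R) ^ ((s - t) * qb)) * ENNReal.ofReal
                (|w z.1 - w z.2| ^ p z / (ν ^ p z * ‖z.1 - z.2‖ ^ (s * p z + N)))) := by
            refine setLIntegral_mono' hBB fun z hz => ?_
            by_cases hz0 : z.1 = z.2
            · -- On the diagonal the numerator vanishes.
              simp [hz0, Real.zero_rpow hq0.ne']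
            · have hr : 0 < ‖z.1 - z.2‖ := norm_pos_iff.2 (sub_ne_zero.2 hz0)
              have h1 := mem_ball_zero_iff.1 (hΩR (hBΩ hz.1))
              have h2 := mem_ball_zero_iff.1 (hΩR (hBΩ hz.2))
              have hrD : ‖z.1 - z.2‖ ≤ 2 * R := by linarith [norm_sub_le z.1 z.2]
              rw [← ENNReal.ofReal_mul (by positivity),
                ← ENNReal.ofReal_add (by positivity) (by positivity),
                ← ENNReal.ofReal_mul (by positivity)]
              exact ENNReal.ofReal_le_ofReal (pointwise_bound (abs_nonneg _) hr hrD hν hq0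
                (hqble z ⟨subset_closure hz.1, subset_closure hz.2⟩) hts)
        _ ≤ ENNReal.ofReal (ν ^ qb) * (K + ENNReal.ofReal ((2 * R) ^ ((s - t) * qb)) * 1) := by
            rw [lintegral_const_mul' _ _ ENNReal.ofReal_ne_top,
              -- Splitting the integral needs measurability of the kernel only.
              lintegral_add_left (measurable_kernel _),
              lintegral_const_mul' _ _ ENNReal.ofReal_ne_top]
            gcongr
            exact (lintegral_mono_set (Set.prod_mono hBΩ hBΩ)).trans hle
        _ = ENNReal.ofReal (ν ^ qb * M) := by
            rw [mul_one, hM, ENNReal.ofReal_mul (by positivity),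
              ENNReal.ofReal_add ENNReal.toReal_nonneg (by positivity),
              ENNReal.ofReal_toReal hK.ne]
    calc _ ≤ ENNReal.ofReal (ν ^ qb * M) ^ (1 / qb) := by gcongr
      _ = ENNReal.ofReal (M ^ (1 / qb) * ν) := by
          rw [ENNReal.ofReal_rpow_of_nonneg (by positivity) (by positivity),
            Real.mul_rpow (by positivity) hMpos.le, ← Real.rpow_mul hν.le,
            mul_one_div_cancel hq0.ne', Real.rpow_one, mul_comm]
  -- The left side is finite, so the bound by the infimum can be proved in `ℝ`, where the set of
  -- admissible `ν` is nonempty and `sInf` is a genuine infimum.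
  obtain ⟨ν₀, hν₀, hle₀⟩ := hex
  have hfin := ((key ν₀ hν₀ hle₀).trans_lt ENNReal.ofReal_lt_top).ne
  rw [← ENNReal.ofReal_toReal hfin]
  apply ENNReal.ofReal_le_ofReal
  rw [mul_comm (M ^ (1 / qb)), ← div_le_iff₀ (by positivity)]
  refine le_csInf ⟨ν₀, hν₀, hle₀⟩ ?_
  rintro ν ⟨hν, hle⟩
  rw [div_le_iff₀ (by positivity), mul_comm ν]
  exact ENNReal.toReal_le_of_le_ofReal (by positivity) (key ν hν hle)
end
end
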